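/- Let λ be a d-invariant rational lamination and L an infinite λ-unlinked class. If (θ, θ') is a connected component of (R/Z) \ closure(L), then θ and θ' are rational and λ-equivalent. -/

import Mathlib

noncomputable section
open Set Function

/-- The circle `ℝ/ℤ`. -/
abbrev Circle1 := AddCircle (1 : ℝ)

/-- Multiplication by `d` on the circle. -/
def md (d : ℕ) (x : Circle1) : Circle1 := d • x

/-- The rational angles `ℚ/ℤ ⊆ ℝ/ℤ`. -/
def ratC : Set Circle1 := {x | ∃ q : ℚ, x = ((q : ℝ) : Circle1)}

/-- `A` and `B` are unlinked: `B` is contained in a single connected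
component of the complement of `A`. -/
def Unlinked (A B : Set Circle1) : Prop :=
  ∃ x ∈ Aᶜ, B ⊆ connectedComponentIn Aᶜ x

/-- `C` is a connected component of `S`. -/
def IsCompOf (C S : Set Circle1) : Prop :=
  ∃ x ∈ S, C = connectedComponentIn S x

/-- The class of `x` under a relation `r`. -/
def relClass (r : Circle1 → Circle1 → Prop) (x : Circle1) : Set Circle1 := {y | r x y}

/-- A rational lamination: a closed equivalence relation on `ℚ/ℤ` with finite,
pairwise unlinked classes. -/
structure RatLam where
  rel : Circle1 → Circle1 → Prop
  rel_rat : ∀ x y, rel x y → x ∈ ratC ∧ y ∈ ratC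
  refl : ∀ x ∈ ratC, rel x x
  symm : ∀ x y, rel x y → rel y x
  trans : ∀ x y z, rel x y → rel y z → rel x z
  closed' : ∀ x ∈ ratC, ∀ y ∈ ratC,
    (x, y) ∈ closure {p : Circle1 × Circle1 | rel p.1 p.2} → rel x y
  finiteClass : ∀ x, (relClass rel x).Finite
  unlinkedClass : ∀ x y, ¬ rel x y → Unlinked (relClass rel x) (relClass rel y)

/-- `m_d` maps `A` onto `B` in a consecutive-preserving way: the image of `A` is `B`
and the connected components of the complement of `A` are sent to components of the
complement of `B` endpoint-wise. -/
def ConsecutiveImage (d : ℕ) (A B : Set Circle1) : Prop :=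
  md d '' A = B ∧
    ∀ C, IsCompOf C Aᶜ → ∃ C', IsCompOf C' Bᶜ ∧ frontier C' = md d '' frontier C

/-- A `d`-invariant rational lamination. -/
structure InvRatLam (d : ℕ) extends RatLam where
  invariant : ∀ x ∈ ratC,
    ConsecutiveImage d (relClass rel x) (relClass rel (md d x))

/-- `m_d : A → m_d(A)` is `δ`-to-one. -/
def classDeg (d : ℕ) (A : Set Circle1) (δ : ℕ) : Prop :=
  ∀ y ∈ md d '' A, Set.ncard {x | x ∈ A ∧ md d x = y} = δ

/-- The `λ`-unlinked relation on irrational angles: `θ ~ θ'` iff they lie in the same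
connected component of the complement of every `λ`-class. -/
def UnlRel (r : Circle1 → Circle1 → Prop) (θ θ' : Circle1) : Prop :=
  θ ∉ ratC ∧ θ' ∉ ratC ∧
    (θ = θ' ∨ ∀ x ∈ ratC, θ' ∈ connectedComponentIn (relClass r x)ᶜ θ)

/-- `L` is a `λ`-unlinked class. -/
def IsUnlClass (r : Circle1 → Circle1 → Prop) (L : Set Circle1) : Prop :=
  ∃ θ, θ ∉ ratC ∧ L = {θ' | UnlRel r θ θ'}


structure RLam (d : ℕ) (R : ℝ → ℝ → Prop) : Prop where
  two : 2 ≤ d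
  rat : ∀ x y, R x y → ¬ Irrational x
  refl : ∀ x, ¬ Irrational x → R x x
  symm : ∀ x y, R x y → R y x
  trans : ∀ x y z, R x y → R y z → R x z
  per : ∀ x, ¬ Irrational x → R x (x+1)
  closed : ∀ x y, ¬ Irrational x → ¬ Irrational y →
    (∀ ε > 0, ∃ a b, R a b ∧ |a - x| < ε ∧ |b - y| < ε) → R x y
  fin : ∀ x a b, {y | R x y ∧ a ≤ y ∧ y ≤ b}.Finite
  unl : ∀ a b c e, a < b → b < c → c < e → e < a + 1 → R a c → R b e → R a b
  inv : ∀ x y, R x y → R (d*x) (d*y)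
  onto : ∀ x z, ¬ Irrational x → R (d*x) z → ∃ y, ∃ k : ℤ, R x y ∧ d*y = z+k

def inArc (a b s : ℝ) : Prop := ∃ k : ℤ, a < s + k ∧ s + k < b

def UU (R : ℝ → ℝ → Prop) (s t : ℝ) : Prop :=
  ∀ a b, R a b → a < b → b < a + 1 → (inArc a b s ↔ inArc a b t)

def Good (R : ℝ → ℝ → Prop) (u v : ℝ) : Prop :=
  ∀ ε > 0, ∃ a b, R a b ∧ u < a ∧ a < u + ε ∧ v - ε < b ∧ b < v

namespace RLam
variable {d : ℕ} {R : ℝ → ℝ → Prop}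

lemma rat' (h : RLam d R) {x y : ℝ} (hr : R x y) : ¬ Irrational y := h.rat _ _ (h.symm _ _ hr)

lemma irr_add_int {x : ℝ} (k : ℤ) : Irrational (x + k) ↔ Irrational x := by
  constructor
  · intro h; exact h.of_add_intCast
  · intro h; exact h.add_intCast k

lemma perZ (h : RLam d R) {x : ℝ} (hx : ¬ Irrational x) (k : ℤ) : R x (x + k) := by
  induction k using Int.induction_on with
  | zero => simpa using h.refl _ hx
  | succ n ih =>
    have := h.per (x + (n:ℤ)) (by rwa [irr_add_int])
    have := h.trans _ _ _ ih this
    push_cast at *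
    rwa [← add_assoc]
  | pred n ih =>
    have := h.per (x + ((-(n:ℤ) - 1 : ℤ) : ℝ)) (by rwa [irr_add_int])
    have h2 := h.symm _ _ this
    push_cast at *
    refine h.trans _ _ _ ih ?_
    convert h2 using 1
    ring

lemma shiftr (h : RLam d R) {x y : ℝ} (hr : R x y) (k : ℤ) : R x (y + k) :=
  h.trans _ _ _ hr (h.perZ (h.rat' hr) k)

lemma shiftl (h : RLam d R) {x y : ℝ} (hr : R x y) (k : ℤ) : R (x+k) y :=
  h.symm _ _ (h.shiftr (h.symm _ _ hr) k)

lemma shift (h : RLam d R) {x y : ℝ} (hr : R x y) (k l : ℤ) : R (x+k) (y+l) :=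
  h.shiftl (h.shiftr hr l) k

lemma dpos (h : RLam d R) : (2:ℝ) ≤ d := by exact_mod_cast h.two

lemma refl_lam (h : RLam d R) : RLam d (fun x y => R (-x) (-y)) where
  two := h.two
  rat x y hr := by have := h.rat _ _ hr; rwa [irrational_neg_iff] at this
  refl x hx := h.refl _ (by rwa [irrational_neg_iff])
  symm x y hr := h.symm _ _ hr
  trans x y z := h.trans _ _ _
  per x hx := by
    have := h.perZ (x := -x) (by rwa [irrational_neg_iff]) (-1)
    convert this using 1; push_cast; ring
  closed x y hx hy hh := by
    refine h.closed _ _ (by rwa [irrational_neg_iff]) (by rwa [irrational_neg_iff]) ?_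
    intro ε hε
    obtain ⟨a, b, hr, ha, hb⟩ := hh ε hε
    refine ⟨-a, -b, hr, ?_, ?_⟩
    · rw [← abs_neg]; convert ha using 2; ring
    · rw [← abs_neg]; convert hb using 2; ring
  fin x a b := by
    have := (h.fin (-x) (-b) (-a)).image (fun y => -y)
    refine this.subset ?_
    rintro y ⟨h1, h2, h3⟩
    exact ⟨-y, ⟨h1, by linarith, by linarith⟩, by simp⟩
  unl a b c e h1 h2 h3 h4 r1 r2 := by
    have := h.unl (-e) (-c) (-b) (-a) (by linarith) (by linarith) (by linarith) (by linarith)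
      (h.symm _ _ r2) (h.symm _ _ r1)
    exact h.trans _ _ _ r1 (h.trans _ _ _ (h.symm _ _ this) (h.symm _ _ r2))
  inv x y hr := by
    have := h.inv _ _ hr
    simpa using this
  onto x z hx hr := by
    obtain ⟨y, k, h1, h2⟩ := h.onto (-x) (-z) (by rwa [irrational_neg_iff]) (by simpa using hr)
    refine ⟨-y, -k, by simpa using h1, ?_⟩
    push_cast; linarith

/-! basic facts on U -/
lemma inArc_shift (a b s : ℝ) (k : ℤ) : inArc a b (s + k) ↔ inArc a b s := by
  constructor
  · rintro ⟨l, h1, h2⟩; refine ⟨k + l, ?_, ?_⟩ <;> push_cast <;> linarith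
  · rintro ⟨l, h1, h2⟩; refine ⟨l - k, ?_, ?_⟩ <;> push_cast <;> linarith

lemma U_refl (s : ℝ) : UU R s s := fun _ _ _ _ _ => Iff.rfl
lemma U_symm {s t : ℝ} (h : UU R s t) : UU R t s := fun a b h1 h2 h3 => (h a b h1 h2 h3).symm
lemma U_trans {s t r : ℝ} (h : UU R s t) (h' : UU R t r) : UU R s r :=
  fun a b h1 h2 h3 => (h a b h1 h2 h3).trans (h' a b h1 h2 h3)
lemma U_shift (s : ℝ) (k : ℤ) : UU R s (s + k) := fun a b _ _ _ => (inArc_shift a b s k).symm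
lemma U_shiftr {s t : ℝ} (h : UU R s t) (k : ℤ) : UU R s (t + k) := U_trans h (U_shift t k)
lemma U_shiftl {s t : ℝ} (h : UU R s t) (k : ℤ) : UU R (s + k) t := U_trans (U_symm (U_shift s k)) h

lemma not_inArc {a b s : ℝ} (k : ℤ) (h1 : s + k ≤ a) (h2 : b ≤ s + k + 1) : ¬ inArc a b s := by
  rintro ⟨l, h3, h4⟩
  have : (k:ℝ) < l := by linarith
  have h5 : k + 1 ≤ l := by exact_mod_cast this
  have : (k:ℝ) + 1 ≤ l := by exact_mod_cast h5
  linarith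

lemma sep {s t a b : ℝ} (hU : UU R s t) (hr : R a b) (h1 : s < a) (h2 : a < t) (h3 : t < b)
    (h4 : b < s + 1) : False := by
  have := (hU a b hr (by linarith) (by linarith)).2 ⟨0, by simpa using h2, by simpa using h3⟩
  exact not_inArc (a := a) (b := b) (s := s) 0 (by simp; linarith) (by simp; linarith) this

lemma conv (h : RLam d R) {s t : ℝ} (hs : Irrational s) (ht : Irrational t) (h1 : s < t)
    (h2 : t < s + 1) (hU : ¬ UU R s t) : ∃ a b, R a b ∧ s < a ∧ a < t ∧ t < b ∧ b < s + 1 := by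
  unfold UU at hU
  push Not at hU
  obtain ⟨a, b, hr, hab, hba, hx⟩ := hU
  have irA := h.rat _ _ hr
  have irB := h.rat' hr
  rcases hx with ⟨⟨k, h3, h4⟩, h5⟩ | ⟨h5, ⟨k, h3, h4⟩⟩
  · have e1 : b ≤ t + k := by
      by_contra hc; push Not at hc; exact h5 ⟨k, by linarith, hc⟩
    have e2 : t + k - 1 ≤ a := by
      by_contra hc; push Not at hc; exact h5 ⟨k-1, by push_cast; linarith, by push_cast; linarith⟩
    have e1' : b ≠ t + k := by rintro rfl; exact irB (by rwa [irr_add_int])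
    have e2' : t + k - 1 ≠ a := by
      rintro rfl; apply irA
      have := (irr_add_int (x := t) (k-1)).2 ht
      push_cast at this; rwa [← add_sub_assoc] at this
    have e1 := lt_of_le_of_ne e1 e1'
    have e2 := lt_of_le_of_ne e2 e2'
    have r := h.shift (h.symm _ _ hr) (-k) (1-k)
    push_cast at r
    exact ⟨_, _, r, by linarith, by linarith, by linarith, by linarith⟩
  · have e1 : s + k ≤ a := by
      by_contra hc; push Not at hc; exact h5 ⟨k, by linarith, by linarith⟩
    have e2 : b ≤ s + k + 1 := by
      by_contra hc; push Not at hc; exact h5 ⟨k+1, by push_cast; linarith, by push_cast; linarith⟩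
    have e1' : s + k ≠ a := by rintro rfl; exact irA (by rwa [irr_add_int])
    have e2' : b ≠ s + k + 1 := by
      rintro rfl; apply irB
      have := (irr_add_int (x := s) (k+1)).2 hs
      push_cast at this; rwa [← add_assoc] at this
    have e1 := lt_of_le_of_ne e1 e1'
    have e2 := lt_of_le_of_ne e2 e2'
    have r := h.shift hr (-k) (-k)
    push_cast at r
    exact ⟨_, _, r, by linarith, by linarith, by linarith, by linarith⟩

lemma unlU (h : RLam d R) {p q p' q' : ℝ} (ip : Irrational p) (iq : Irrational q)
    (ip' : Irrational p') (h1 : p < q) (h2 : q < p') (h3 : p' < q') (h4 : q' < p + 1)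
    (u1 : UU R p p') (u2 : UU R q q') : UU R p q := by
  by_contra hU
  obtain ⟨a, b, hr, e1, e2, e3, e4⟩ := h.conv ip iq h1 (by linarith) hU
  have : b < p' := by
    rcases lt_trichotomy b p' with hb | hb | hb
    · exact hb
    · subst hb; exact absurd ip' (h.rat' hr)
    · exact (sep u1 hr e1 (by linarith) hb e4).elim
  have r := h.shift (h.symm _ _ hr) 0 1
  push_cast at r
  exact sep u2 r (by linarith) (by linarith) (by linarith) (by linarith)

/-! fin -/
lemma accL (h : RLam d R) {a v : ℝ} (H : ∀ ε > 0, ∃ y, R a y ∧ v - ε < y ∧ y < v) : False := by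
  have hf := h.fin a (v-1) v
  have hf2 : {y | R a y ∧ v - 1 < y ∧ y < v}.Finite :=
    hf.subset (fun y hy => ⟨hy.1, hy.2.1.le, hy.2.2.le⟩)
  obtain ⟨y0, hy0⟩ := H 1 one_pos
  obtain ⟨m, hm, hmax⟩ := hf2.exists_maximal ⟨y0, hy0⟩
  obtain ⟨y, h1, h2, h3⟩ := H (v - m) (by linarith [hm.2.2])
  have hmy : m < y := by linarith
  have := hmax (y := y) ⟨h1, by linarith [hm.2.1], h3⟩ hmy.le
  linarith

lemma accR (h : RLam d R) {a v : ℝ} (H : ∀ ε > 0, ∃ y, R a y ∧ v < y ∧ y < v + ε) : False := by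
  refine h.refl_lam.accL (a := -a) (v := -v) ?_
  intro ε hε
  obtain ⟨y, h1, h2, h3⟩ := H ε hε
  exact ⟨-y, by simpa using h1, by linarith, by linarith⟩

lemma Good_shift (h : RLam d R) {u v : ℝ} (g : Good R u v) (k l : ℤ) : Good R (u+k) (v+l) := by
  intro ε hε
  obtain ⟨a, b, hr, h1, h2, h3, h4⟩ := g ε hε
  exact ⟨a+k, b+l, h.shift hr k l, by linarith, by linarith, by linarith, by linarith⟩

lemma Good_mul (h : RLam d R) {u v : ℝ} (g : Good R u v) : Good R (d*u) (d*v) := by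
  intro ε hε
  have hd := h.dpos
  have hd0 : (0:ℝ) < d := by linarith
  obtain ⟨a, b, hr, h1, h2, h3, h4⟩ := g (ε/d) (by positivity)
  refine ⟨d*a, d*b, h.inv _ _ hr, by nlinarith, ?_, ?_, by nlinarith⟩
  · have := mul_lt_mul_of_pos_left h2 hd0
    rw [mul_add, mul_div_cancel₀ _ hd0.ne'] at this; exact this
  · have := mul_lt_mul_of_pos_left h3 hd0
    rw [mul_sub, mul_div_cancel₀ _ hd0.ne'] at this; exact this

lemma Good_pow (h : RLam d R) {u v : ℝ} (g : Good R u v) (n : ℕ) : Good R (d^n*u) (d^n*v) := by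
  induction n with
  | zero => simpa using g
  | succ n ih => have := h.Good_mul ih; convert this using 1 <;> ring

lemma Good_uniq_aux (h : RLam d R) {u u' v : ℝ} (g : Good R u v) (g' : Good R u' v)
    (h1 : u < u') (h2 : u' < v) (h3 : v ≤ u + 1) : False := by
  obtain ⟨a, b, hr, a1, a2, b1, b2⟩ := g (min (u'-u) (v-u')) (by simp [h1, h2])
  have e1 := min_le_left (u'-u) (v-u')
  have e2 := min_le_right (u'-u) (v-u')
  have hab : u' < b := by linarith
  refine h.accL (a := a) (v := v) ?_
  intro ε hε
  obtain ⟨a', b', hr', c1, c2, c3, c4⟩ := g' (min ε (min (b-u') (v-b)))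
    (by simp [hε, hab, b2])
  have f1 := min_le_left ε (min (b-u') (v-b))
  have f2 := min_le_right ε (min (b-u') (v-b))
  have f3 := min_le_left (b-u') (v-b)
  have f4 := min_le_right (b-u') (v-b)
  have := h.unl a a' b b' (by linarith) (by linarith) (by linarith) (by linarith) hr hr'
  exact ⟨b', h.trans _ _ _ this hr', by linarith, c4⟩

lemma exists_lift (u v : ℝ) : ∃ k : ℤ, v - 1 ≤ u + k ∧ u + k < v := by
  refine ⟨⌈v - 1 - u⌉, ?_, ?_⟩
  · linarith [Int.le_ceil (v - 1 - u)]
  · linarith [Int.ceil_lt_add_one (v - 1 - u)]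

lemma Good_uniq (h : RLam d R) {u u' v : ℝ} (g : Good R u v) (g' : Good R u' v) :
    ∃ k : ℤ, u' = u + k := by
  obtain ⟨k, k1, k2⟩ := exists_lift u v
  obtain ⟨l, l1, l2⟩ := exists_lift u' v
  have G := h.Good_shift g k 0
  have G' := h.Good_shift g' l 0
  push_cast at G G'
  rw [add_zero] at G G'
  rcases lt_trichotomy (u+k) (u'+l) with hl | hl | hl
  · exact (h.Good_uniq_aux G G' hl l2 (by linarith)).elim
  · exact ⟨k - l, by push_cast; linarith⟩
  · exact (h.Good_uniq_aux G' G hl k2 (by linarith)).elim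

lemma pow_ne (h : RLam d R) {u : ℝ} (hu : Irrational u) {i j : ℕ} (hij : i ≠ j) (k : ℤ) :
    (d:ℝ)^i * u ≠ d^j * u + k := by
  intro he
  have h1 : ((d:ℝ)^i - d^j) ≠ 0 := by
    rw [sub_ne_zero]
    intro hh
    have : d^i = d^j := by exact_mod_cast hh
    exact hij (Nat.pow_right_injective h.two this)
  have : u = ((k / ((d:ℚ)^i - d^j) : ℚ) : ℝ) := by
    push_cast
    rw [eq_div_iff h1]; linarith
  exact (this ▸ hu) ⟨_, rfl⟩

lemma good_rat (h : RLam d R) {u v : ℝ} (g : Good R u v) (hv : ¬ Irrational v) :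
    ¬ Irrational u := by
  intro hu
  obtain ⟨q, rfl⟩ : ∃ q : ℚ, (q:ℝ) = v := by simpa [Irrational] using hv
  -- fract of d^n q takes finitely many values
  have : ∃ i j : ℕ, i ≠ j ∧ Int.fract ((d:ℚ)^i * q) = Int.fract ((d:ℚ)^j * q) := by
    let f : ℕ → ℤ := fun n => ((d:ℤ)^n * q.num) % q.den
    have hm : ∀ n ∈ (univ : Set ℕ), f n ∈ Set.Icc (0:ℤ) q.den := by
      intro n _
      have hpos : (0:ℤ) < q.den := by exact_mod_cast q.den_pos
      exact ⟨Int.emod_nonneg _ hpos.ne', (Int.emod_lt_of_pos _ hpos).le⟩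
    obtain ⟨i, -, j, -, hij, hf⟩ := Set.infinite_univ.exists_ne_map_eq_of_mapsTo hm
      (Set.finite_Icc _ _)
    refine ⟨i, j, hij, ?_⟩
    rw [Int.fract_eq_fract]
    have : (q.den:ℤ) ∣ (d:ℤ)^i * q.num - (d:ℤ)^j * q.num :=
      Int.ModEq.dvd (hf.symm : (d:ℤ)^j * q.num ≡ (d:ℤ)^i * q.num [ZMOD q.den])
    obtain ⟨z, hz⟩ := this
    refine ⟨z, ?_⟩
    have hden : (q.den:ℚ) ≠ 0 := by exact_mod_cast q.den_nz
    have hz' : (d:ℚ)^i * q.num - (d:ℚ)^j * q.num = q.den * z := by exact_mod_cast hz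
    have hq : q = q.num / q.den := (Rat.num_div_den q).symm
    rw [hq]
    field_simp
    linarith
  obtain ⟨i, j, hij, hf⟩ := this
  rw [Int.fract_eq_fract] at hf
  obtain ⟨z, hz⟩ := hf
  have hz' : (d:ℝ)^i * q = d^j * q + z := by
    have : ((((d:ℚ)^i * q - d^j * q : ℚ)) : ℝ) = ((z : ℚ) : ℝ) := by exact_mod_cast hz
    push_cast at this; linarith
  have g1 := h.Good_pow g i
  have g2 := h.Good_shift (h.Good_pow g j) 0 z
  rw [← hz'] at g2
  push_cast at g2; rw [add_zero] at g2
  obtain ⟨k, hk⟩ := h.Good_uniq g1 g2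
  exact h.pow_ne hu hij.symm k hk

lemma Good_refl {u v : ℝ} (hs : ∀ x y, R x y → R y x) (g : Good R u v) :
    Good (fun x y => R (-x) (-y)) (-v) (-u) := by
  intro ε hε
  obtain ⟨a, b, hr, h1, h2, h3, h4⟩ := g ε hε
  exact ⟨-b, -a, by simpa using hs _ _ hr, by linarith, by linarith, by linarith, by linarith⟩

lemma good_rat' (h : RLam d R) {u v : ℝ} (g : Good R u v) (hu : ¬ Irrational u) :
    ¬ Irrational v := by
  have := h.refl_lam.good_rat (Good_refl h.symm g) (by rwa [irrational_neg_iff])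
  rwa [irrational_neg_iff] at this

lemma good_closed (h : RLam d R) {u v : ℝ} (g : Good R u v) (hu : ¬ Irrational u) 
    (hv : ¬ Irrational v) : R u v := by
  apply h.closed _ _ hu hv
  intro ε hε
  obtain ⟨a, b, hr, h1, h2, h3, h4⟩ := g ε hε
  exact ⟨a, b, hr, by rw [abs_lt]; constructor <;> linarith, by rw [abs_lt]; constructor <;> linarith⟩

lemma HL (h : RLam d R) {p q : ℝ} 
    (H : ∀ ε > 0, ∃ a b, R a b ∧ p ≤ a ∧ a < p + ε ∧ q - ε < b ∧ b ≤ q) : R p q ∨ Good R p q := by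
  by_contra hc
  push Not at hc
  obtain ⟨h1, h2⟩ := hc
  unfold Good at h2
  push Not at h2
  obtain ⟨e0, he0, h2⟩ := h2
  have : (∀ ε > 0, ∃ y, R p y ∧ q - ε < y ∧ y < q) ∨ (∀ ε > 0, ∃ y, R q y ∧ p < y ∧ y < p + ε) := by
    by_contra hc
    push Not at hc
    obtain ⟨⟨e1, he1, h3⟩, ⟨e2, he2, h4⟩⟩ := hc
    obtain ⟨a, b, hr, c1, c2, c3, c4⟩ := H (min e0 (min e1 e2)) (by simp [*])
    have f1 := min_le_left e0 (min e1 e2)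
    have f2 := min_le_right e0 (min e1 e2)
    have f3 := min_le_left e1 e2
    have f4 := min_le_right e1 e2
    rcases c1.eq_or_lt with c1 | c1
    · subst c1
      rcases c4.eq_or_lt with c4 | c4
      · subst c4; exact h1 hr
      · linarith [h3 b hr (by linarith)]
    · rcases c4.eq_or_lt with c4 | c4
      · subst c4; linarith [h4 a (h.symm _ _ hr) c1]
      · linarith [h2 a b hr c1 (by linarith) (by linarith)]
  rcases this with H | H
  · exact h.accL H
  · exact h.accR H

lemma Good_U (h : RLam d R) {z θ : ℝ} (g : Good R z θ) (iz : Irrational z) (iθ : Irrational θ)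
    (h1 : z < θ) (h2 : θ ≤ z + 1) : UU R z θ := by
  rcases h2.eq_or_lt with h2 | h2
  · subst h2; have := U_shift (R := R) z 1; push_cast at this; exact this
  by_contra hc
  obtain ⟨e, f, hr, c1, c2, c3, c4⟩ := h.conv iz iθ h1 h2 hc
  refine h.accL (a := e) (v := θ) ?_
  intro ε hε
  obtain ⟨a, b, hr', a1, a2, a3, a4⟩ := g (min ε (min (e - z) (θ - e))) (by simp [*])
  have f1 := min_le_left ε (min (e - z) (θ - e))
  have f2 := min_le_right ε (min (e - z) (θ - e))
  have f3 := min_le_left (e - z) (θ - e)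
  have f4 := min_le_right (e - z) (θ - e)
  have := h.unl a e b f (by linarith) (by linarith) (by linarith) (by linarith) hr' hr
  exact ⟨b, h.trans _ _ _ (h.symm _ _ this) hr', by linarith, a4⟩

lemma Good_free {z θ t : ℝ} (g : Good R z θ) (h2 : θ ≤ z + 1) (h3 : z < t) (h4 : t < θ)
    (hU : UU R θ t) : False := by
  obtain ⟨a, b, hr, a1, a2, a3, a4⟩ := g (min (t - z) (θ - t)) (by simp [*])
  have f3 := min_le_left (t - z) (θ - t)
  have f4 := min_le_right (t - z) (θ - t)
  have hU' := U_shiftl hU (-1)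
  push_cast at hU'
  exact sep hU' hr (by linarith) (by linarith) (by linarith) (by linarith)

end RLam

def hull (R : ℝ → ℝ → Prop) (u v a b : ℝ) : Prop := R a b ∧ u ≤ a ∧ a < b ∧ b ≤ v

def hullO (R : ℝ → ℝ → Prop) (u v x : ℝ) : Prop := ∃ a b, hull R u v a b ∧ a < x ∧ x < b

structure HullCov (R : ℝ → ℝ → Prop) (u v : ℝ) : Prop where
  lt : u < v
  le : v ≤ u + 1
  irr : v = u + 1 → Irrational u
  cov : ∀ t, Irrational t → u < t → t < v → hullO R u v t

namespace RLam
variable {d : ℕ} {R : ℝ → ℝ → Prop}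

lemma HullCov_refl (h : RLam d R) {u v : ℝ} (c : HullCov R u v) :
    HullCov (fun x y => R (-x) (-y)) (-v) (-u) where
  lt := by linarith [c.lt]
  le := by linarith [c.le]
  irr := by
    intro he
    have : v = u + 1 := by linarith
    have h2 := c.irr this
    rw [irrational_neg_iff, this]
    have := (irr_add_int (x := u) 1).2 h2
    exact_mod_cast this
  cov := by
    intro t it h1 h2
    obtain ⟨a, b, ⟨hr, h3, h4, h5⟩, h6, h7⟩ := c.cov (-t) (by rwa [irrational_neg_iff]) (by linarith) (by linarith)
    exact ⟨-b, -a, ⟨by simpa using h.symm _ _ hr, by linarith, by linarith, by linarith⟩, by linarith, by linarith⟩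

lemma merge (h : RLam d R) {u v a b a' b' : ℝ} (c : HullCov R u v) (h1 : hull R u v a b)
    (h2 : hull R u v a' b') (h3 : a' ≤ b) (h4 : a ≤ b') : hull R u v (min a a') (max b b') := by
  have key : ∀ a b a' b', hull R u v a b → hull R u v a' b' → a ≤ a' → a' ≤ b → b ≤ b' →
      hull R u v a b' := by
    intro a b a' b' h1 h2 h3 h4 h5
    obtain ⟨r1, x1, x2, x3⟩ := h1
    obtain ⟨r2, y1, y2, y3⟩ := h2
    refine ⟨?_, x1, by linarith, y3⟩
    rcases h3.eq_or_lt with e | h3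
    · subst e; exact r2
    rcases h4.eq_or_lt with e | h4
    · subst e; exact h.trans _ _ _ r1 r2
    rcases h5.eq_or_lt with e | h5
    · subst e; exact r1
    have hb : b' < a + 1 := by
      by_contra hc
      push Not at hc
      have l := c.le
      have e : v = u + 1 := by linarith
      have e2 : a = u := by linarith
      exact h.rat _ _ r1 (e2 ▸ c.irr e)
    exact h.trans _ _ _ (h.unl _ _ _ _ h3 h4 h5 hb r1 r2) r2
  rcases le_total a a' with g1 | g1 <;> rcases le_total b b' with g2 | g2
  · rw [min_eq_left g1, max_eq_right g2]; exact key _ _ _ _ h1 h2 g1 h3 g2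
  · rw [min_eq_left g1, max_eq_left g2]; exact h1
  · rw [min_eq_right g1, max_eq_right g2]; exact h2
  · rw [min_eq_right g1, max_eq_left g2]; exact key _ _ _ _ h2 h1 g1 h4 g2

lemma hull_compact (h : RLam d R) {u v p q : ℝ} (c : HullCov R u v) (hpq : p ≤ q)
    (H : ∀ x, p ≤ x → x ≤ q → hullO R u v x) : ∃ a b, hull R u v a b ∧ a < p ∧ q < b := by
  let S : Set ℝ := {x | p ≤ x ∧ x ≤ q ∧ ∃ a b, hull R u v a b ∧ a < p ∧ x < b}
  have hp : p ∈ S := by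
    obtain ⟨a, b, h1, h2, h3⟩ := H p le_rfl hpq
    exact ⟨le_rfl, hpq, a, b, h1, h2, h3⟩
  have hbd : BddAbove S := ⟨q, fun x hx => hx.2.1⟩
  have s1 : p ≤ sSup S := le_csSup hbd hp
  have s2 : sSup S ≤ q := csSup_le ⟨p, hp⟩ (fun x hx => hx.2.1)
  obtain ⟨a, b, h1, h2, h3⟩ := H _ s1 s2
  obtain ⟨x, ⟨x1, x2, a1, b1, g1, g2, g3⟩, hx⟩ := exists_lt_of_lt_csSup ⟨p, hp⟩ h2
  have hxs : x ≤ sSup S := le_csSup hbd ⟨x1, x2, a1, b1, g1, g2, g3⟩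
  have m := h.merge c g1 h1 (by linarith) (by linarith)
  have m1 : min a1 a < p := lt_of_le_of_lt (min_le_left _ _) g2
  by_contra hc
  push Not at hc
  have hq := hc _ _ m m1
  have hb : b ≤ q := (le_max_right _ _).trans hq
  have : (sSup S + b)/2 ∈ S := ⟨by linarith, by linarith, _, _, m, m1,
    lt_of_lt_of_le (by linarith) (le_max_right _ _)⟩
  have := le_csSup hbd this
  linarith

lemma hull_left (h : RLam d R) {u v z ε : ℝ} (c : HullCov R u v) (hε : 0 < ε) (hz1 : u < z)
    (hz2 : z < v) (hz : ¬ hullO R u v z) (H : ∀ x, z - ε < x → x < z → hullO R u v x) :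
    ∃ α, hull R u v α z := by
  have irz : ¬ Irrational z := fun hi => hz (c.cov z hi hz1 hz2)
  let y := z - ε/2
  have hy := H y (by simp only [y]; linarith) (by simp only [y]; linarith)
  have hyz : y < z := by simp only [y]; linarith
  let S : Set ℝ := {a | ∃ b, hull R u v a b ∧ a < y ∧ y < b}
  have hne : S.Nonempty := by
    obtain ⟨a, b, h1, h2, h3⟩ := hy
    exact ⟨a, b, h1, h2, h3⟩
  have hbd : BddBelow S := ⟨u, by rintro a ⟨b, h1, _⟩; exact h1.2.1⟩
  set α := sInf S with hα
  have hu : u ≤ α := le_csInf hne (by rintro a ⟨b, h1, _⟩; exact h1.2.1)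
  have hαy : α < y := by
    obtain ⟨a, ha⟩ := hne
    exact lt_of_le_of_lt (csInf_le hbd ha) ha.choose_spec.2.1
  have hh : R α z ∨ Good R α z := by
    apply h.HL
    intro e he
    obtain ⟨a, ⟨b, h1, h2, h3⟩, h4⟩ := exists_lt_of_csInf_lt hne (show sInf S < α + e by linarith)
    obtain ⟨a', b', g1, g2, g3⟩ := h.hull_compact c (p := y) (q := max y (z - e/2)) (le_max_left _ _) (by
      intro x x1 x2
      apply H
      · have : y = z - ε/2 := rfl
        linarith
      · refine lt_of_le_of_lt x2 (max_lt hyz (by linarith)))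
    have g4 := lt_of_le_of_lt (le_max_left _ _) g3
    have g5 := lt_of_le_of_lt (le_max_right _ _) g3
    have m := h.merge c h1 g1 (by linarith) (by linarith)
    have m1 : min a a' < y := lt_of_le_of_lt (min_le_left _ _) h2
    have m2 : y < max b b' := lt_of_lt_of_le h3 (le_max_left _ _)
    refine ⟨_, _, m.1, csInf_le hbd ⟨_, m, m1, m2⟩, lt_of_le_of_lt (min_le_left _ _) h4,
      lt_of_lt_of_le (by linarith) (le_max_right _ _), ?_⟩
    by_contra hc
    push Not at hc
    exact hz ⟨_, _, m, by linarith, hc⟩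
  refine ⟨α, ?_, hu, by linarith, hz2.le⟩
  rcases hh with hh | hh
  · exact hh
  · exact h.good_closed hh (h.good_rat hh irz) irz

lemma hullO_refl (h : RLam d R) {u v x : ℝ} (H : hullO R u v x) :
    hullO (fun x y => R (-x) (-y)) (-v) (-u) (-x) := by
  obtain ⟨a, b, ⟨hr, h3, h4, h5⟩, h6, h7⟩ := H
  exact ⟨-b, -a, ⟨by simpa using h.symm _ _ hr, by linarith, by linarith, by linarith⟩, by linarith, by linarith⟩

lemma hull_right (h : RLam d R) {u v z ε : ℝ} (c : HullCov R u v) (hε : 0 < ε) (hz1 : u < z)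
    (hz2 : z < v) (hz : ¬ hullO R u v z) (H : ∀ x, z < x → x < z + ε → hullO R u v x) :
    ∃ β, hull R u v z β := by
  obtain ⟨α, r, h1, h2, h3⟩ := h.refl_lam.hull_left (h.HullCov_refl c) (z := -z) hε (by linarith) (by linarith)
    (by intro hc
        have := h.refl_lam.hullO_refl hc
        simp only [neg_neg] at this
        exact hz this)
    (by intro x h1 h2
        have := h.hullO_refl (H (-x) (by linarith) (by linarith))
        simpa using this)
  exact ⟨-α, by simpa using h.symm _ _ r, by linarith, by linarith, by linarith⟩

lemma hull_all (h : RLam d R) {u v t t' : ℝ} (c : HullCov R u v) (it : Irrational t)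
    (it' : Irrational t') (h1 : u < t) (h2 : t < t') (h3 : t' < v) :
    ∃ a b, hull R u v a b ∧ a < t ∧ t' < b := by
  apply h.hull_compact c h2.le
  by_contra hc
  push Not at hc
  obtain ⟨x0, x1, x2, x3⟩ := hc
  let Z : Set ℝ := {x | t ≤ x ∧ x ≤ t' ∧ ¬ hullO R u v x}
  have hO : IsOpen {x | hullO R u v x} := by
    have : {x | hullO R u v x} = ⋃ (a : ℝ) (b : ℝ) (_ : hull R u v a b), Ioo a b := by
      ext x; simp only [mem_setOf_eq, mem_iUnion, mem_Ioo, exists_prop, hullO]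
    rw [this]
    exact isOpen_iUnion fun a => isOpen_iUnion fun b => isOpen_iUnion fun _ => isOpen_Ioo
  have hcl : IsClosed Z := by
    have : Z = Icc t t' ∩ {x | hullO R u v x}ᶜ := by ext x; simp [Z, and_assoc]
    rw [this]
    exact isClosed_Icc.inter hO.isClosed_compl
  have hcount : Z.Countable := by
    refine (Set.countable_range (fun q : ℚ => (q:ℝ))).mono ?_
    intro x hx
    by_contra hi
    have hi : Irrational x := hi
    exact hx.2.2 (c.cov x hi (by linarith [hx.1]) (by linarith [hx.2.1]))
  have hnp : ¬ Preperfect Z := by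
    intro hp
    obtain ⟨f, hf, -, hinj⟩ := Perfect.exists_nat_bool_injection (C := Z) ⟨hcl, hp⟩ ⟨x0, x1, x2, x3⟩
    have hc : (univ : Set (ℕ → Bool)).Countable :=
      MapsTo.countable_of_injOn (f := f) (t := Z) (fun x _ => hf ⟨x, rfl⟩) hinj.injOn hcount
    have hc2 : Countable (ℕ → Bool) := Set.countable_univ_iff.1 hc
    obtain ⟨g, hg⟩ := exists_surjective_nat (ℕ → Bool)
    obtain ⟨n, hn⟩ := hg (fun m => ! g m m)
    have := congrFun hn n
    simp at this
  rw [preperfect_iff_nhds] at hnp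
  push Not at hnp
  obtain ⟨z, hz, W, hW, hiso⟩ := hnp
  have hzt : t < z := lt_of_le_of_ne hz.1 (by
    rintro rfl; exact hz.2.2 (c.cov _ it h1 (by linarith)))
  have hzt' : z < t' := lt_of_le_of_ne hz.2.1 (by
    rintro rfl; exact hz.2.2 (c.cov _ it' (by linarith) (by linarith)))
  obtain ⟨e, he, hball⟩ := Metric.mem_nhds_iff.1 hW
  have key : ∀ x, x ≠ z → |x - z| < min e (min (z - t) (t' - z)) → hullO R u v x := by
    intro x hxz hx
    have f1 := min_le_left e (min (z - t) (t' - z))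
    have f2 := min_le_right e (min (z - t) (t' - z))
    have f3 := min_le_left (z - t) (t' - z)
    have f4 := min_le_right (z - t) (t' - z)
    by_contra hn
    have h5 := abs_lt.1 hx
    exact hxz (hiso x ⟨hball (by rw [Metric.mem_ball, Real.dist_eq]; linarith), by linarith, by linarith, hn⟩)
  have hδ : 0 < min e (min (z - t) (t' - z)) := by simp [*]
  obtain ⟨α, hα⟩ := h.hull_left c hδ (by linarith) (by linarith) hz.2.2 (by
    intro x y1 y2
    apply key x y2.ne
    rw [abs_lt]; constructor <;> linarith)
  obtain ⟨β, hβ⟩ := h.hull_right c hδ (by linarith) (by linarith) hz.2.2 (by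
    intro x y1 y2
    apply key x y1.ne'
    rw [abs_lt]; constructor <;> linarith)
  exact hz.2.2 ⟨α, β, ⟨h.trans _ _ _ hα.1 hβ.1, hα.2.1, by linarith [hα.2.2.1, hβ.2.2.1], hβ.2.2.2⟩,
    hα.2.2.1, hβ.2.2.1⟩

lemma hull_step (h : RLam d R) {u v : ℝ} (c : HullCov R u v) : R u v ∨ Good R u v := by
  apply h.HL
  intro ε hε
  have hlt := c.lt
  obtain ⟨t, it, t1, t2⟩ := exists_irrational_btwn (show u < min (u + ε) ((u+v)/2) by
    rw [lt_min_iff]; constructor <;> linarith)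
  obtain ⟨t', it', t1', t2'⟩ := exists_irrational_btwn (show max (v - ε) ((u+v)/2) < v by
    rw [max_lt_iff]; constructor <;> linarith)
  rw [lt_min_iff] at t2
  rw [max_lt_iff] at t1'
  obtain ⟨a, b, h1, h2, h3⟩ := h.hull_all c it it' t1 (by linarith) t2'
  exact ⟨a, b, h1.1, h1.2.1, by linarith, by linarith, h1.2.2.2⟩

/-- gaps of classes -/
lemma gap (h : RLam d R) {u v s : ℝ} (is : Irrational s) (h1 : u < v) (h2 : v ≤ u + 1)
    (h3 : v = u + 1 → Irrational u)
    (hu : ∀ ε > 0, ∃ t, Irrational t ∧ UU R s t ∧ |t - u| < ε)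
    (hv : ∀ ε > 0, ∃ t, Irrational t ∧ UU R s t ∧ |t - v| < ε)
    (hf : ∀ t, Irrational t → UU R s t → u < t → t < v → False) : R u v ∨ Good R u v := by
  apply h.hull_step
  refine ⟨h1, h2, h3, ?_⟩
  intro t it t1 t2
  have hn : ¬ UU R s t := fun hU => hf t it hU t1 t2
  obtain ⟨k, k1, k2⟩ := exists_lift s t
  have k1 : t - 1 < s + k := by
    refine lt_of_le_of_ne k1 ?_
    intro he
    apply hn
    have : t = s + ((k+1 : ℤ) : ℝ) := by push_cast; linarith
    rw [this]; exact U_shift _ _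
  obtain ⟨a, b, hr, e1, e2, e3, e4⟩ := h.conv ((irr_add_int k).2 is) it k2 (by linarith)
    (fun hU => hn (U_trans (U_shift s k) hU))
  have key : ∀ x, Irrational x → UU R s x → ¬ (a < x ∧ x < b) := by
    rintro x ix hx ⟨x1, x2⟩
    exact sep (U_shiftl hx k) hr e1 x1 x2 e4
  refine ⟨a, b, ⟨hr, ?_, by linarith, ?_⟩, e2, e3⟩
  · by_contra hc
    push Not at hc
    obtain ⟨x, ix, ux, hx⟩ := hu (min (u - a) (b - u)) (by simp; constructor <;> linarith)
    have f3 := min_le_left (u - a) (b - u)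
    have f4 := min_le_right (u - a) (b - u)
    rw [abs_lt] at hx
    exact key x ix ux ⟨by linarith, by linarith⟩
  · by_contra hc
    push Not at hc
    obtain ⟨x, ix, ux, hx⟩ := hv (min (v - a) (b - v)) (by simp; constructor <;> linarith)
    have f3 := min_le_left (v - a) (b - v)
    have f4 := min_le_right (v - a) (b - v)
    rw [abs_lt] at hx
    exact key x ix ux ⟨by linarith, by linarith⟩

lemma U_closed (h : RLam d R) {s u : ℝ} (is : Irrational s) (iu : Irrational u)
    (hu : ∀ ε > 0, ∃ t, Irrational t ∧ UU R s t ∧ |t - u| < ε) : UU R s u := by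
  by_contra hn
  obtain ⟨k, k1, k2⟩ := exists_lift s u
  have k1 : u - 1 < s + k := by
    refine lt_of_le_of_ne k1 ?_
    intro he
    apply hn
    have : u = s + ((k+1 : ℤ) : ℝ) := by push_cast; linarith
    rw [this]; exact U_shift _ _
  obtain ⟨a, b, hr, e1, e2, e3, e4⟩ := h.conv ((irr_add_int k).2 is) iu k2 (by linarith)
    (fun hU => hn (U_trans (U_shift s k) hU))
  obtain ⟨x, ix, ux, hx⟩ := hu (min (u - a) (b - u)) (by simp; constructor <;> linarith)
  have f3 := min_le_left (u - a) (b - u)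
  have f4 := min_le_right (u - a) (b - u)
  rw [abs_lt] at hx
  exact sep (U_shiftl ux k) hr e1 (by linarith) (by linarith) e4

end RLam


def LFin (R : ℝ → ℝ → Prop) (s : ℝ) : Prop :=
  ∀ a b, {t | Irrational t ∧ UU R s t ∧ a ≤ t ∧ t ≤ b}.Finite

namespace RLam
variable {d : ℕ} {R : ℝ → ℝ → Prop}

lemma fin_pigeon {K : Set ℤ} (hK : K.Finite) (P : ℤ → ℝ → Prop)
    (mono : ∀ k e e', e ≤ e' → P k e → P k e')
    (H : ∀ e, 0 < e → e ≤ 1 → ∃ k ∈ K, P k e) : ∃ k ∈ K, ∀ e > 0, P k e := by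
  by_contra hc
  push Not at hc
  choose! e he1 he2 using hc
  obtain ⟨k0, hk0, -⟩ := H 1 one_pos le_rfl
  obtain ⟨m, hm, hmin⟩ := Set.exists_min_image K e hK ⟨k0, hk0⟩
  obtain ⟨k, hk, hP⟩ := H (min 1 (e m)) (by simp [he1 m hm]) (min_le_left _ _)
  exact he2 k hk (mono k _ _ ((min_le_right _ _).trans (hmin k hk)) hP)

lemma irr_mul (h : RLam d R) {x : ℝ} : Irrational (d * x) ↔ Irrational x := by
  have := h.two
  constructor
  · intro hi; exact hi.of_natCast_mul
  · intro hi; exact hi.natCast_mul (by omega)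

lemma irr_pow (h : RLam d R) {x : ℝ} (hx : Irrational x) (n : ℕ) : Irrational ((d:ℝ)^n * x) := by
  induction n with
  | zero => simpa using hx
  | succ n ih =>
    have := h.irr_mul.2 ih
    rwa [← mul_assoc, ← pow_succ'] at this

lemma lifting (h : RLam d R) {p θ : ℝ} (g : Good R p (d*θ)) :
    ∃ z, (∃ l : ℤ, d * z = p + l) ∧ z < θ ∧ θ ≤ z + 1 ∧ Good R z θ := by
  have hd := h.dpos
  have hd0 : (0:ℝ) < d := by linarith
  let P : ℤ → ℝ → Prop := fun k e => ∃ x y, R y x ∧ θ - 1 ≤ y ∧ y < θ ∧ θ - e < x ∧ x < θ ∧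
    (p + k)/d < y ∧ y < (p+k)/d + e
  have := fin_pigeon (K := Icc ⌊d*(θ-2) - p⌋ ⌈d * θ - p⌉) (finite_Icc _ _) P (by
    rintro k e e' he ⟨x, y, h1, h2, h3, h4, h5, h6, h7⟩
    exact ⟨x, y, h1, h2, h3, by linarith, h5, h6, by linarith⟩) (by
    intro e he he1
    obtain ⟨a, b, hr, c1, c2, c3, c4⟩ := g (d*e) (by positivity)
    have hrb := h.rat' hr
    have hbd : (d:ℝ) * (b/d) = b := by field_simp
    have hx : ¬ Irrational (b/d) := by
      rw [← h.irr_mul, hbd]; exact hrb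
    obtain ⟨y, k, r1, r2⟩ := h.onto (b/d) a hx (by rw [hbd]; exact h.symm _ _ hr)
    obtain ⟨j, j1, j2⟩ := exists_lift y θ
    have hk : d * (y + j) = a + ((k + d*j : ℤ) : ℝ) := by push_cast; linarith
    have q1 : (p + ((k + d*j : ℤ) : ℝ))/d < y + j := by
      rw [div_lt_iff₀ hd0]; nlinarith
    have q2 : y + j < (p + ((k + d*j : ℤ) : ℝ))/d + e := by
      rw [← sub_lt_iff_lt_add, lt_div_iff₀ hd0]; nlinarith
    refine ⟨k + d*j, ⟨?_, ?_⟩, b/d, y + j, h.symm _ _ (h.shiftr r1 j), j1, j2, ?_, ?_, q1, q2⟩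
    · apply Int.le_of_lt_add_one
      have : ((⌊d*(θ-2) - p⌋ : ℤ) : ℝ) < ((k + d*j + 1 : ℤ) : ℝ) := by
        refine lt_of_le_of_lt (Int.floor_le _) ?_
        rw [← sub_lt_iff_lt_add, lt_div_iff₀ hd0] at q2
        push_cast at *
        nlinarith
      exact_mod_cast this
    · have : ((k + d*j : ℤ) : ℝ) < ⌈d * θ - p⌉ := by
        refine lt_of_lt_of_le ?_ (Int.le_ceil _)
        rw [div_lt_iff₀ hd0] at q1
        nlinarith
      exact_mod_cast this.le
    · rw [lt_div_iff₀ hd0]; nlinarith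
    · rw [div_lt_iff₀ hd0]; nlinarith)
  obtain ⟨k, -, hP⟩ := this
  refine ⟨(p+k)/d, ⟨k, by field_simp⟩, ?_, ?_, ?_⟩
  · obtain ⟨x, y, h1, h2, h3, h4, h5, h6, h7⟩ := hP 1 one_pos
    linarith
  · refine le_of_forall_pos_lt_add ?_
    intro e he
    obtain ⟨x, y, h1, h2, h3, h4, h5, h6, h7⟩ := hP e he
    linarith
  · intro e he
    obtain ⟨x, y, h1, h2, h3, h4, h5, h6, h7⟩ := hP e he
    exact ⟨y, x, h1, h6, h7, h4, h5⟩

lemma pred_gap (h : RLam d R) {q : ℝ} (iq : Irrational q) (hf : LFin R q) :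
    ∃ p, Irrational p ∧ UU R q p ∧ p < q ∧ Good R p q := by
  have hf' : {t | Irrational t ∧ UU R q t ∧ q - 1 ≤ t ∧ t < q}.Finite :=
    (hf (q-1) q).subset (fun t ht => ⟨ht.1, ht.2.1, ht.2.2.1, ht.2.2.2.le⟩)
  have hne : q - 1 ∈ {t | Irrational t ∧ UU R q t ∧ q - 1 ≤ t ∧ t < q} := by
    have h1 := (irr_add_int (x := q) (-1)).2 iq
    have h2 := U_shift (R := R) q (-1)
    push_cast at h1 h2
    exact ⟨h1, h2, by linarith, by linarith⟩
  obtain ⟨p, ⟨ip, up, p1, p2⟩, hmax⟩ := Set.exists_max_image _ id hf' ⟨_, hne⟩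
  refine ⟨p, ip, up, p2, ?_⟩
  rcases h.gap iq p2 (by linarith) (fun _ => ip) (fun ε hε => ⟨p, ip, up, by simpa using hε⟩)
    (fun ε hε => ⟨q, iq, U_refl q, by simpa using hε⟩) (by
      intro t it ut t1 t2
      have := hmax t ⟨it, ut, by linarith, t2⟩
      simp only [id] at this
      linarith) with hr | hg
  · exact absurd ip (h.rat _ _ hr)
  · exact hg

lemma LFin_congr {s t : ℝ} (hU : UU R s t) (hf : LFin R s) : LFin R t := fun a b =>
  (hf a b).subset (fun _ hx => ⟨hx.1, U_trans hU hx.2.1, hx.2.2⟩)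

lemma LFin_pull (h : RLam d R) {θ : ℝ} (iθ : Irrational θ) (hf : LFin R (d*θ)) : LFin R θ := by
  have hd := h.dpos
  have hd0 : (0:ℝ) < d := by linarith
  let Φ : Set ℝ := {t | Irrational t ∧ UU R θ t ∧ UU R (d*θ) (d*t)}
  have hΦ : ∀ a b, (Φ ∩ Icc a b).Finite := by
    intro a b
    have := (hf (d*a) (d*b)).image (fun x : ℝ => x / (d:ℝ))
    refine this.subset ?_
    rintro t ⟨⟨it, ut, udt⟩, ta, tb⟩
    refine ⟨d*t, ⟨h.irr_mul.2 it, udt, by nlinarith, by nlinarith⟩, by field_simp⟩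
  have step : ∀ t ∈ Φ, ∃ z ∈ Φ, z < t ∧ ∀ x, z < x → x < t → ¬ UU R θ x := by
    rintro t ⟨it, ut, udt⟩
    obtain ⟨p, ip, up, hp, g⟩ := h.pred_gap (h.irr_mul.2 it) (LFin_congr udt hf)
    obtain ⟨z, ⟨l, hl⟩, z1, z2, gz⟩ := h.lifting g
    have iz : Irrational z := by rw [← h.irr_mul, hl, irr_add_int]; exact ip
    have uz := h.Good_U gz iz it z1 z2
    refine ⟨z, ⟨iz, U_trans ut (U_symm uz), ?_⟩, z1, ?_⟩
    · rw [hl]; exact U_shiftr (U_trans udt up) l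
    · intro x x1 x2 ux
      exact Good_free gz z2 x1 x2 (U_trans (U_symm ut) ux)
  have hsub : ∀ t, Irrational t → UU R θ t → t ∈ Φ := by
    intro t it ut
    by_contra hn
    let k : ℤ := ⌈t - θ⌉ + 1
    have hk : t < θ + k := by
      have := Int.le_ceil (t - θ)
      simp only [k]; push_cast; linarith
    have hθ : θ + k ∈ Φ := by
      refine ⟨(irr_add_int k).2 iθ, U_shift θ k, ?_⟩
      rw [mul_add]
      have := U_shift (R := R) (d*θ) (d*k)
      push_cast at this; exact this
    have hfin : (Φ ∩ {x | t < x ∧ x ≤ θ + k}).Finite :=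
      (hΦ t (θ+k)).subset (fun x hx => ⟨hx.1, hx.2.1.le, hx.2.2⟩)
    obtain ⟨m, ⟨mΦ, m1, m2⟩, hmin⟩ := Set.exists_min_image _ id hfin ⟨_, hθ, hk, le_rfl⟩
    obtain ⟨z, zΦ, z1, z2⟩ := step m mΦ
    rcases lt_trichotomy z t with hz | hz | hz
    · exact z2 t hz m1 ut
    · exact hn (hz ▸ zΦ)
    · have := hmin z ⟨zΦ, hz, by linarith⟩
      simp only [id] at this; linarith
  intro a b
  exact (hΦ a b).subset (fun t ht => ⟨hsub t ht.1 ht.2.1, ht.2.2⟩)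

lemma not_LFin_pow (h : RLam d R) {u : ℝ} (iu : Irrational u) (hu : ¬ LFin R u) (n : ℕ) :
    ¬ LFin R (d^n * u) := by
  induction n with
  | zero => simpa using hu
  | succ n ih =>
    intro hc
    apply ih
    apply h.LFin_pull (h.irr_pow iu n)
    rw [← mul_assoc, ← pow_succ']; exact hc

lemma F0 (h : RLam d R) {x y : ℝ} (ix : Irrational x) (iy : Irrational y) (hU : UU R x y)
    (h1 : x < y) (h2 : d * (y - x) < 1) : UU R (d*x) (d*y) := by
  have hd := h.dpos
  have hd0 : (0:ℝ) < d := by linarith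
  by_contra hn
  obtain ⟨e, f, hr, c1, c2, c3, c4⟩ := h.conv (h.irr_mul.2 ix) (h.irr_mul.2 iy) (by nlinarith)
    (by nlinarith) hn
  have hbd : (d:ℝ) * (e/d) = e := by field_simp
  have hx : ¬ Irrational (e/d) := by
    rw [← h.irr_mul, hbd]; exact h.rat _ _ hr
  obtain ⟨y', k, r1, r2⟩ := h.onto (e/d) f hx (by rw [hbd]; exact hr)
  obtain ⟨j, j1, j2⟩ := exists_lift y' (x + 1)
  have hk : d * (y' + j) = f + ((k + d*j : ℤ) : ℝ) := by push_cast; linarith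
  have hy : y < y' + j := by
    by_contra hc
    push Not at hc
    generalize k + d*j = l at hk
    have k1 : (l:ℝ) < 0 := by nlinarith
    have k1' : l ≤ -1 := by have : l < 0 := by exact_mod_cast k1
                            omega
    have k2 : (l:ℝ) ≤ -1 := by exact_mod_cast k1'
    nlinarith
  refine sep hU (h.shiftr r1 j) ?_ ?_ hy j2
  · rw [lt_div_iff₀ hd0]; nlinarith
  · rw [div_lt_iff₀ hd0]; nlinarith

lemma NoFin (h : RLam d R) {u v : ℝ} (g : Good R u v) (iu : Irrational u) (iv : Irrational v)
    (T : Set ℕ) (hT : T.Finite) (H : ∀ n : ℕ, ∃ m ∈ T, UU R (d^n*u) (d^m*u)) : False := by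
  have hd := h.dpos
  have hd0 : (0:ℝ) < d := by linarith
  have hq : ∀ n : ℕ, ∃ q, d^n*u < q ∧ q ≤ d^n*u + 1 ∧ Irrational q ∧ Good R (d^n*u) q ∧
      ∃ k : ℤ, q = d^n*v + k := by
    intro n
    let k : ℤ := -⌈d^n*v - d^n*u - 1⌉
    have k1 := Int.le_ceil (d^n*v - d^n*u - 1)
    have k2 := Int.ceil_lt_add_one (d^n*v - d^n*u - 1)
    refine ⟨d^n*v + k, by simp only [k]; push_cast; linarith, by simp only [k]; push_cast; linarith,
      (irr_add_int k).2 (h.irr_pow iv n), ?_, k, rfl⟩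
    have := h.Good_shift (h.Good_pow g n) 0 k
    push_cast at this; rwa [add_zero] at this
  choose q q1 q2 iq gq qk using hq
  have inf : ∀ N : ℕ, ∃ n ≥ N, 1 ≤ d * (q n - d^n*u) := by
    intro N
    by_contra hc
    push Not at hc
    have key : ∀ j : ℕ, q (N + j) - d^(N+j)*u = d^j * (q N - d^N*u) := by
      intro j
      induction j with
      | zero => simp
      | succ j ih =>
        have e1 := hc (N+j) (by omega)
        obtain ⟨k, hk⟩ := qk (N+j)
        obtain ⟨l, hl⟩ := qk (N+(j+1))
        have a1 := q1 (N+(j+1))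
        have a2 := q2 (N+(j+1))
        have a3 := q1 (N+j)
        have e : (d:ℝ)^(N+(j+1)) = d * d^(N+j) := by rw [← add_assoc, pow_succ']
        have e2 : (q (N+(j+1)) - d^(N+(j+1))*u) - d * (q (N+j) - d^(N+j)*u) = ((l - d*k : ℤ):ℝ) := by
          rw [hl, hk, e]; push_cast; ring
        have b1 : ((l - d*k : ℤ):ℝ) < ((1:ℤ):ℝ) := by
          rw [← e2]; push_cast; nlinarith
        have b2 : ((-1 : ℤ):ℝ) < ((l - d*k : ℤ):ℝ) := by
          rw [← e2]; push_cast; nlinarith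
        have b1' : l - d*k < 1 := by exact_mod_cast b1
        have b2' : -1 < l - d*k := by exact_mod_cast b2
        have b3 : l - d*k = 0 := by omega
        rw [b3] at e2
        push_cast at e2
        rw [pow_succ', mul_assoc, ← ih]
        linarith
    have hpos : 0 < q N - d^N*u := by linarith [q1 N]
    obtain ⟨j, hj⟩ := pow_unbounded_of_one_lt (1/(q N - d^N*u)) (show (1:ℝ) < d by linarith)
    have := key j
    rw [div_lt_iff₀ hpos] at hj
    have h3 := q2 (N+j)
    linarith
  choose m hmT hmU using H
  let I : Set ℕ := {n | 1 ≤ d * (q n - d^n*u)}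
  have hI : I.Infinite := by
    rw [Set.infinite_iff_exists_gt]
    intro N
    obtain ⟨n, hn, hh⟩ := inf (N+1)
    exact ⟨n, hh, by omega⟩
  obtain ⟨n1, hn1, n2, hn2, hne, heq⟩ := hI.exists_ne_map_eq_of_mapsTo
    (f := fun n => (m n, ⌊d * Int.fract ((d:ℝ)^n*u)⌋)) (t := T ×ˢ Icc (0:ℤ) d) (by
      intro n _
      refine ⟨hmT n, ?_, ?_⟩
      · apply Int.floor_nonneg.2
        have := Int.fract_nonneg ((d:ℝ)^n*u)
        positivity
      · have h1 := Int.fract_lt_one ((d:ℝ)^n*u)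
        have : d * Int.fract ((d:ℝ)^n*u) < ((d:ℤ):ℝ) + 1 := by push_cast; nlinarith
        exact Int.lt_add_one_iff.1 (Int.floor_lt.2 (by push_cast at *; exact this))) 
      (hT.prod (finite_Icc _ _))
  have claim : ∀ n1 n2 : ℕ, n1 ∈ I → m n1 = m n2 → 
      ⌊d * Int.fract ((d:ℝ)^n1*u)⌋ = ⌊d * Int.fract ((d:ℝ)^n2*u)⌋ →
      Int.fract ((d:ℝ)^n1*u) < Int.fract ((d:ℝ)^n2*u) → False := by
    intro n1 n2 hn1 e1 e2 hlt
    have e3 := Int.abs_sub_lt_one_of_floor_eq_floor e2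
    rw [abs_lt] at e3
    have hn1 : 1 ≤ d * (q n1 - d^n1*u) := hn1
    have f1 := Int.self_sub_floor ((d:ℝ)^n1*u)
    have f2 := Int.self_sub_floor ((d:ℝ)^n2*u)
    have hx : d^n2*u + ((⌊(d:ℝ)^n1*u⌋ - ⌊(d:ℝ)^n2*u⌋ : ℤ) : ℝ) - d^n1*u = 
      Int.fract ((d:ℝ)^n2*u) - Int.fract ((d:ℝ)^n1*u) := by push_cast; linarith
    refine Good_free (gq n1) (q2 n1) (t := d^n2*u + ((⌊(d:ℝ)^n1*u⌋ - ⌊(d:ℝ)^n2*u⌋ : ℤ) : ℝ)) 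
      (by linarith) (by nlinarith) ?_
    apply U_shiftr
    have u1 := h.Good_U (gq n1) (h.irr_pow iu n1) (iq n1) (q1 n1) (q2 n1)
    have u2 := hmU n1
    have u3 := hmU n2
    rw [← e1] at u3
    exact U_trans (U_symm u1) (U_trans u2 (U_symm u3))
  simp only [Prod.mk.injEq] at heq
  rcases lt_trichotomy (Int.fract ((d:ℝ)^n1*u)) (Int.fract ((d:ℝ)^n2*u)) with hl | hl | hl
  · exact claim n1 n2 hn1 heq.1 heq.2 hl
  · rw [Int.fract_eq_fract] at hl
    obtain ⟨z, hz⟩ := hl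
    exact h.pow_ne iu hne z (by linarith)
  · exact claim n2 n1 hn2 heq.1.symm heq.2.symm hl
end RLam


def Weird (d : ℕ) (R : ℝ → ℝ → Prop) (s : ℝ) : Prop :=
  ∃ t, Irrational t ∧ UU R s t ∧ ¬ UU R (d*s) (d*t)

namespace RLam
variable {d : ℕ} {R : ℝ → ℝ → Prop}

lemma int_zero {k : ℤ} (h1 : (k:ℝ) < 1) (h2 : -1 < (k:ℝ)) : k = 0 := by
  have h1 : k < 1 := by exact_mod_cast h1
  have h2 : -1 < k := by exact_mod_cast h2
  omega

lemma liftp (h : RLam d R) {e f t : ℝ} {k0 : ℤ} (c : ℝ) (hr : R e f) (ht : d*t = e + k0) :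
    ∃ g, ∃ l : ℤ, R t g ∧ d*g = f + l ∧ c ≤ g ∧ g < c+1 := by
  have it : ¬ Irrational t := by
    rw [← h.irr_mul, ht, irr_add_int]; exact h.rat _ _ hr
  obtain ⟨g, k, r1, r2⟩ := h.onto t f it (by rw [ht]; exact h.shiftl hr k0)
  obtain ⟨j, j1, j2⟩ := exists_lift g (c+1)
  exact ⟨g + j, k + d*j, h.shiftr r1 j, by push_cast; linarith, by linarith, j2⟩

lemma strip (h : RLam d R) {x y a a' b b' : ℝ} {w : ℤ} (ix : Irrational x) (iy : Irrational y)
    (hU : UU R x y) (h1 : a < x) (h2 : x < a') (h3 : a' < b') (h4 : b' < y) (h5 : y < b)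
    (h6 : b < a + 1) (r : R a b) (r' : R a' b') (hn : ¬ R (d*a) (d*a'))
    (w1 : w < d*(b'-a')) (w2 : d*(b-a) < w+1) : UU R (d*x) (d*y) := by
  have hd := h.dpos
  have hd0 : (0:ℝ) < d := by linarith
  by_contra hN
  have m1 := mul_lt_mul_of_pos_left h1 hd0
  have m2 := mul_lt_mul_of_pos_left h2 hd0
  have m4 := mul_lt_mul_of_pos_left h4 hd0
  have m5 := mul_lt_mul_of_pos_left h5 hd0
  rw [mul_sub] at w1 w2
  have sym := h.symm
  have tr := h.trans
  have rα : R (d*a) (d*b - w) := by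
    have := h.shiftr (h.inv _ _ r) (-w); push_cast at this; rwa [← sub_eq_add_neg] at this
  have rα' : R (d*a') (d*b' - w) := by
    have := h.shiftr (h.inv _ _ r') (-w); push_cast at this; rwa [← sub_eq_add_neg] at this
  have iy' : Irrational (d*y - w) := by
    have := (irr_add_int (-w)).2 (h.irr_mul.2 iy); push_cast at this; rwa [← sub_eq_add_neg] at this
  obtain ⟨e, f, hr, c1, c2, c3, c4⟩ := h.conv (h.irr_mul.2 ix) iy' (by linarith) (by linarith)
    (by intro hc; apply hN
        have := U_shiftr hc w
        rwa [sub_add_cancel] at this)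
  -- exclusion of residues
  have exA : ∀ g : ℝ, ∀ l : ℤ, ∀ p, a < g → g < a' → d*a ≤ p → p < d*a+1 → d*g = p + l → d*g = p := by
    intro g l p g1 g2 p1 p2 he
    have n1 := mul_lt_mul_of_pos_left g1 hd0
    have n2 := mul_lt_mul_of_pos_left g2 hd0
    have : l = 0 := int_zero (by linarith) (by linarith)
    rw [he, this]; simp
  have exB : ∀ g : ℝ, ∀ l : ℤ, ∀ p, b' < g → g ≤ b → d*a ≤ p → p < d*a+1 → d*g = p + l → d*g = p + w := by
    intro g l p g1 g2 p1 p2 he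
    have n1 := mul_lt_mul_of_pos_left g1 hd0
    have n2 := mul_le_mul_of_nonneg_left g2 hd0.le
    have : l - w = 0 := int_zero (by push_cast; linarith) (by push_cast; linarith)
    have : l = w := by omega
    rw [he, this]
  by_cases hA : R e (d*a)
  · -- case 1
    have hA' : ¬ R e (d*a') := fun hc => hn (tr _ _ _ (sym _ _ hA) hc)
    have e1 : e ≠ d*a' := by rintro rfl; exact hA' (h.refl _ (h.rat _ _ hr))
    have e2 : e ≠ d*b' - w := by rintro rfl; exact hA' (sym _ _ rα')
    have e3 : e < d*a' ∨ d*b' - w < e := by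
      by_contra hc
      push Not at hc
      have l1 := lt_of_le_of_ne hc.1 e1.symm
      have l2 := lt_of_le_of_ne hc.2 e2
      have rr := h.shiftr hA 1
      push_cast at rr
      exact hA' (sym _ _ (h.unl _ _ _ _ l1 l2 (by linarith) (by linarith) rα' rr))
    obtain ⟨t, k0, ht, hxt, hty, htab⟩ : ∃ t : ℝ, ∃ k0 : ℤ, d*t = e + k0 ∧ x < t ∧ t < y ∧ (t < a' ∨ b' < t) := by
      rcases e3 with e3 | e3
      · have hb : (d:ℝ) * (e/d) = e := by field_simp
        have : e/d < a' := by rw [div_lt_iff₀ hd0]; linarith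
        exact ⟨e/d, 0, by simpa using hb, by rw [lt_div_iff₀ hd0]; linarith, by linarith, Or.inl this⟩
      · have hb : (d:ℝ) * ((e+w)/d) = e+w := by field_simp
        have : b' < (e+w)/d := by rw [lt_div_iff₀ hd0]; linarith
        exact ⟨(e+w)/d, w, hb, by linarith, by rw [div_lt_iff₀ hd0]; linarith, Or.inr this⟩
    obtain ⟨g, l, rg, hg, g1, g2⟩ := h.liftp a hA ht
    have nta' : ¬ R t a' := by
      intro hc
      have := h.inv _ _ hc
      rw [ht] at this
      have := h.shiftl this (-k0)
      push_cast at this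
      rw [add_neg_cancel_right] at this
      exact hA' this
    have q1 : g < a' ∨ b' < g := by
      by_contra hc
      push Not at hc
      have g3 : a' ≠ g := by rintro rfl; exact nta' rg
      have g4 : g ≠ b' := by rintro rfl; exact nta' (tr _ _ _ rg (sym _ _ r'))
      have l1 := lt_of_le_of_ne hc.1 g3
      have l2 := lt_of_le_of_ne hc.2 g4
      rcases htab with ht' | ht'
      · have := h.unl t a' g b' ht' l1 l2 (by linarith) rg r'
        exact nta' this
      · have := h.unl a' g b' t l1 l2 ht' (by linarith) r' (sym _ _ rg)
        exact nta' (tr _ _ _ rg (sym _ _ this))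
    have q2 : g = a ∨ b < g := by
      by_contra hc
      push Not at hc
      have g3 := lt_of_le_of_ne g1 (Ne.symm hc.1)
      rcases q1 with q1 | q1
      · have := exA g l (d*a) g3 q1 le_rfl (by linarith) hg
        have n1 := mul_lt_mul_of_pos_left g3 hd0
        linarith
      · have := exB g l (d*a) q1 hc.2 le_rfl (by linarith) hg
        have n1 := mul_lt_mul_of_pos_left q1 hd0
        linarith
    rcases q2 with q2 | q2
    · subst q2
      have rr := h.shiftr rg 1
      push_cast at rr
      exact sep hU rr hxt hty (by linarith) (by linarith)
    · exact sep hU rg hxt hty (by linarith) (by linarith)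
  · have f1 : f ≠ d*b - w := by rintro rfl; exact hA (tr _ _ _ hr (sym _ _ rα))
    have f2 : f ≠ d*a + 1 := by
      rintro rfl
      have := h.shiftr hr (-1); push_cast at this
      rw [add_neg_cancel_right] at this; exact hA this
    -- get position of f given an endpoint e' in (α, β)
    have posf : ∀ e', R e' f → ¬ R (d*a) e' → d*a < e' → e' < d*b - w → 
      (f < d*b - w ∨ d*a + 1 < f) := by
      intro e' re' ne' l1 l2
      by_contra hc
      push Not at hc
      have l3 := lt_of_le_of_ne hc.1 f1.symm
      have l4 := lt_of_le_of_ne hc.2 f2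
      exact ne' (h.unl _ _ _ _ l1 l2 l3 l4 rα re')
    have liftf : (f < d*b - w ∨ d*a + 1 < f) → ∃ t : ℝ, ∃ k0 : ℤ, d*t = f + k0 ∧ a < t ∧ t < b ∧
        (t < x ∨ y < t) := by
      rintro (e3 | e3)
      · have hb : (d:ℝ) * ((f+w)/d) = f+w := by field_simp
        have : y < (f+w)/d := by rw [lt_div_iff₀ hd0]; linarith
        exact ⟨(f+w)/d, w, hb, by linarith, by rw [div_lt_iff₀ hd0]; linarith, Or.inr this⟩
      · have hb : (d:ℝ) * ((f-1)/d) = f-1 := by field_simp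
        have : (f-1)/d < x := by rw [div_lt_iff₀ hd0]; linarith
        exact ⟨(f-1)/d, -1, by rw [hb]; push_cast; ring, by rw [lt_div_iff₀ hd0]; linarith, by linarith, Or.inl this⟩
    have fin : ∀ t g, R t g → a < t → t < b → (t < x ∨ y < t) → x < g → g < y → False := by
      intro t g rtg t1 t2 t3 g1 g2
      rcases t3 with t3 | t3
      · have rr := h.shiftr (sym _ _ rtg) 1
        push_cast at rr
        exact sep hU rr g1 g2 (by linarith) (by linarith)
      · exact sep hU (sym _ _ rtg) g1 g2 t3 (by linarith)
    -- g is in (a,b)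
    have gab : ∀ t g, R t g → ¬ R t a → a < t → t < b → a ≤ g → g < a+1 → a < g ∧ g < b := by
      intro t g rtg nta t1 t2 g1 g2
      have g3 : a ≠ g := by rintro rfl; exact nta rtg
      have g4 : g ≠ b := by rintro rfl; exact nta (tr _ _ _ rtg (sym _ _ r))
      refine ⟨lt_of_le_of_ne g1 g3, ?_⟩
      by_contra hc
      push Not at hc
      have := h.unl a t b g t1 t2 (lt_of_le_of_ne hc g4.symm) g2 r rtg
      exact nta (sym _ _ this)
    by_cases hA' : R e (d*a')
    · -- case 2
      have ra'f : R (d*a') f := tr _ _ _ (sym _ _ hA') hr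
      obtain ⟨t, k0, ht, t1, t2, t3⟩ := liftf (posf _ ra'f hn (by linarith) (by linarith))
      obtain ⟨g, l, rg, hg, g1, g2⟩ := h.liftp a (sym _ _ ra'f) ht
      have nta : ¬ R t a := by
        intro hc
        have := h.inv _ _ hc
        rw [ht] at this
        have := h.shiftl this (-k0)
        push_cast at this
        rw [add_neg_cancel_right] at this
        exact hn (tr _ _ _ (sym _ _ this) (sym _ _ ra'f))
      obtain ⟨g3, g4⟩ := gab t g rg nta t1 t2 g1 g2
      have g5 : a' ≤ g := by
        by_contra hc
        push Not at hc
        have := exA g l (d*a') g3 hc (by linarith) (by linarith) hg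
        have n1 := mul_lt_mul_of_pos_left hc hd0
        linarith
      have g6 : g ≤ b' := by
        by_contra hc
        push Not at hc
        have := exB g l (d*a') hc g4.le (by linarith) (by linarith) hg
        have n1 := mul_lt_mul_of_pos_left hc hd0
        linarith
      exact fin t g rg t1 t2 t3 (by linarith) (by linarith)
    · -- case 3
      obtain ⟨t, k0, ht, t1, t2, t3⟩ := liftf (posf _ hr (fun hc => hA (sym _ _ hc)) (by linarith) (by linarith))
      obtain ⟨g, l, rg, hg, g1, g2⟩ := h.liftp a (sym _ _ hr) ht
      have nt : ∀ c, R t c → R e (d*c) := by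
        intro c hc
        have := h.inv _ _ hc
        rw [ht] at this
        have := h.shiftl this (-k0)
        push_cast at this
        rw [add_neg_cancel_right] at this
        exact tr _ _ _ hr this
      obtain ⟨g3, g4⟩ := gab t g rg (fun hc => hA (nt _ hc)) t1 t2 g1 g2
      have ntc : ¬ R t a' := fun hc => hA' (nt _ hc)
      have q1 : g < a' ∨ b' < g := by
        by_contra hc
        push Not at hc
        have g5 : a' ≠ g := by rintro rfl; exact ntc rg
        have g6 : g ≠ b' := by rintro rfl; exact ntc (tr _ _ _ rg (sym _ _ r'))
        have l1 := lt_of_le_of_ne hc.1 g5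
        have l2 := lt_of_le_of_ne hc.2 g6
        rcases t3 with t3 | t3
        · exact ntc (h.unl t a' g b' (by linarith) l1 l2 (by linarith) rg r')
        · have := h.unl a' g b' t l1 l2 (by linarith) (by linarith) r' (sym _ _ rg)
          exact ntc (tr _ _ _ rg (sym _ _ this))
      have q2 : x < g ∧ g < y := by
        rcases q1 with q1 | q1
        · have := exA g l e g3 q1 (by linarith) (by linarith) hg
          refine ⟨?_, by linarith⟩
          by_contra hc
          push Not at hc
          have n1 := mul_le_mul_of_nonneg_left hc hd0.le
          linarith
        · have := exB g l e q1 g4.le (by linarith) (by linarith) hg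
          refine ⟨by linarith, ?_⟩
          by_contra hc
          push Not at hc
          have n1 := mul_le_mul_of_nonneg_left hc hd0.le
          linarith
      exact fin t g rg t1 t2 t3 q2.1 q2.2

lemma nest (h : RLam d R) {x y x' y' : ℝ} (ix : Irrational x) (iy : Irrational y)
    (ix' : Irrational x') (iy' : Irrational y') (u : UU R x y) (u' : UU R x' y')
    (hn : ¬ UU R x x') (h1 : x < x') (h2 : x' < y) (h3 : y < x + 1) (h4 : x' < y')
    (h5 : y' < x + 1) : y' < y ∧ ∃ a b, R a b ∧ x < a ∧ a < x' ∧ y' < b ∧ b < y := by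
  obtain ⟨a, b, r, c1, c2, c3, c4⟩ := h.conv ix ix' h1 (by linarith) hn
  have n1 : y' ≠ b := by rintro rfl; exact h.rat' r iy'
  have n2 : y ≠ b := by rintro rfl; exact h.rat' r iy
  have k1 : y' < b := by
    by_contra hc
    push Not at hc
    have rr := h.shiftr (h.symm _ _ r) 1
    push_cast at rr
    exact sep u' rr c3 (lt_of_le_of_ne hc n1.symm) (by linarith) (by linarith)
  have k2 : b < y := by
    by_contra hc
    push Not at hc
    exact sep u r c1 (by linarith) (lt_of_le_of_ne hc n2) c4
  exact ⟨by linarith, a, b, r, c1, c2, k1, k2⟩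

lemma weird_pair (h : RLam d R) {s : ℝ} (is : Irrational s) (hw : Weird d R s) :
    ∃ x y, Irrational x ∧ Irrational y ∧ UU R s x ∧ UU R x y ∧ ¬ UU R (d*x) (d*y) ∧
      0 ≤ x ∧ x < 1 ∧ 1 ≤ d*(y-x) ∧ 1 ≤ d*(x+1-y) := by
  obtain ⟨t, it, ut, nt⟩ := hw
  have U2 : ∀ (p q : ℝ) (k l : ℤ), UU R (d*(p+k)) (d*(q+l)) → UU R (d*p) (d*q) := by
    intro p q k l hU
    have := U_shiftr (U_shiftl hU (-(d*k))) (-(d*l))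
    push_cast at this
    convert this using 1 <;> ring
  let x := s + ((-⌊s⌋ : ℤ) : ℝ)
  have hx0 : 0 ≤ x := by simp only [x]; push_cast; linarith [Int.floor_le s]
  have hx1 : x < 1 := by simp only [x]; push_cast; linarith [Int.lt_floor_add_one s]
  obtain ⟨j, j1, j2⟩ := exists_lift t (x+1)
  have ix : Irrational x := (irr_add_int _).2 is
  have iy : Irrational (t + j) := (irr_add_int _).2 it
  have uxy : UU R x (t+j) := U_shiftr (U_shiftl ut _) _
  have nxy : ¬ UU R (d*x) (d*(t+j)) := fun hc => nt (U2 _ _ _ _ hc)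
  have hlt : x < t + j := by
    refine lt_of_le_of_ne (by linarith) ?_
    intro he
    rw [← he] at nxy
    exact nxy (U_refl _)
  refine ⟨x, t + j, ix, iy, U_shift _ _, uxy, nxy, hx0, hx1, ?_, ?_⟩
  · by_contra hc
    push Not at hc
    exact nxy (h.F0 ix iy uxy hlt hc)
  · by_contra hc
    push Not at hc
    have ix1 := (irr_add_int 1).2 ix
    have u1 := U_shiftr (U_symm uxy) 1
    push_cast at u1 ix1
    have := h.F0 iy ix1 u1 j2 hc
    have h3 := U2 (t+j) x 0 1 (by push_cast; rwa [add_zero])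
    exact nxy (U_symm h3)

lemma F1 (h : RLam d R) (s : ℕ → ℝ) (is : ∀ n, Irrational (s n)) (hw : ∀ n, Weird d R (s n))
    (hn : ∀ n m, n ≠ m → ¬ UU R (s n) (s m)) : False := by
  have hd := h.dpos
  have hd0 : (0:ℝ) < d := by linarith
  have := fun n => h.weird_pair (is n) (hw n)
  choose x y ix iy usx uxy nxy x0 x1 yx xy using this
  have hn' : ∀ n m, n ≠ m → ¬ UU R (x n) (x m) := fun n m hnm hc =>
    hn n m hnm (U_trans (usx n) (U_trans hc (U_symm (usx m))))
  -- pigeonhole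
  have hy2 : ∀ n, y n < 2 := by intro n; nlinarith [xy n, x1 n]
  have hy0 : ∀ n, 0 ≤ y n := by intro n; nlinarith [yx n, x0 n]
  let f : ℕ → ℤ × ℤ × ℤ := fun n => (⌊4*d*x n⌋, ⌊4*d*y n⌋, ⌊d*(y n - x n)⌋)
  have hf : ∀ n, f n ∈ (Icc (0:ℤ) (8*d)) ×ˢ (Icc (0:ℤ) (8*d)) ×ˢ (Icc (0:ℤ) (8*d)) := by
    intro n
    have a1 := x0 n
    have a2 := x1 n
    have a3 := hy0 n
    have a4 := hy2 n
    have a5 := yx n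
    refine ⟨⟨?_, ?_⟩, ⟨?_, ?_⟩, ⟨?_, ?_⟩⟩
    · exact Int.floor_nonneg.2 (by positivity)
    · refine Int.lt_add_one_iff.1 (Int.floor_lt.2 ?_); push_cast; nlinarith
    · exact Int.floor_nonneg.2 (by positivity)
    · refine Int.lt_add_one_iff.1 (Int.floor_lt.2 ?_); push_cast; nlinarith
    · exact Int.floor_nonneg.2 (by linarith)
    · refine Int.lt_add_one_iff.1 (Int.floor_lt.2 ?_); push_cast; nlinarith
  obtain ⟨c, hc⟩ : ∃ c, (f ⁻¹' {c}).Infinite := by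
    have hfin : ((Icc (0:ℤ) (8*d)) ×ˢ (Icc (0:ℤ) (8*d)) ×ˢ (Icc (0:ℤ) (8*d))).Finite :=
      (finite_Icc _ _).prod ((finite_Icc _ _).prod (finite_Icc _ _))
    by_contra hcon
    push Not at hcon
    have : (univ : Set ℕ) ⊆ ⋃ c ∈ ((Icc (0:ℤ) (8*d)) ×ˢ (Icc (0:ℤ) (8*d)) ×ˢ (Icc (0:ℤ) (8*d))), f ⁻¹' {c} := by
      intro n _
      simp only [mem_iUnion]
      exact ⟨f n, hf n, rfl⟩
    exact Set.infinite_univ ((hfin.biUnion (fun c _ => hcon c)).subset this)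
  let φ : ℕ → ℕ := Nat.nth (fun n => n ∈ f ⁻¹' {c})
  have hφ : ∀ n, f (φ n) = c := fun n => Nat.nth_mem_of_infinite hc n
  have hφi : Injective φ := Nat.nth_injective hc
  obtain ⟨g, hg⟩ := exists_increasing_or_nonincreasing_subseq (· < ·) (fun n => x (φ n))
  -- reindex
  let X := fun n => x (φ (g n))
  let Y := fun n => y (φ (g n))
  have ne : ∀ n m, n ≠ m → φ (g n) ≠ φ (g m) := fun n m hnm hc => hnm (g.injective (hφi hc))
  have nU : ∀ n m, n ≠ m → ¬ UU R (X n) (X m) := fun n m hnm => hn' _ _ (ne n m hnm)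
  have bins : ∀ n m, f (φ (g n)) = f (φ (g m)) := fun n m => by rw [hφ, hφ]
  have bX : ∀ n m, 4*d*(X n - X m) < 1 := by
    intro n m
    have := bins n m
    simp only [f, Prod.mk.injEq] at this
    have := Int.abs_sub_lt_one_of_floor_eq_floor this.1
    rw [abs_lt] at this
    linarith
  have bY : ∀ n m, 4*d*(Y n - Y m) < 1 := by
    intro n m
    have := bins n m
    simp only [f, Prod.mk.injEq] at this
    have := Int.abs_sub_lt_one_of_floor_eq_floor this.2.1
    rw [abs_lt] at this
    linarith
  obtain ⟨w, hw1, hw2⟩ : ∃ w : ℤ, (∀ n, w ≤ d*(Y n - X n)) ∧ ∀ n, d*(Y n - X n) < w + 1 := by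
    refine ⟨c.2.2, ?_, ?_⟩ <;> intro n <;> have := hφ (g n) <;> rw [← this]
    · exact Int.floor_le _
    · exact Int.lt_floor_add_one _
  have XY : ∀ n m, X n < Y m := by
    intro n m
    have a1 := yx (φ (g m))
    have a2 := bX n m
    simp only [X, Y] at *
    by_contra hc
    push Not at hc
    nlinarith
  have YX : ∀ n m, Y n < X m + 1 := by
    intro n m
    have a1 := xy (φ (g n))
    have a2 := bX n m
    simp only [X, Y] at *
    by_contra hc
    push Not at hc
    nlinarith
  have nst : ∀ n m, X n < X m → Y m < Y n ∧ ∃ a b, R a b ∧ X n < a ∧ a < X m ∧ Y m < b ∧ b < Y n := by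
    intro n m hnm
    exact h.nest (ix _) (iy _) (ix _) (iy _) (uxy _) (uxy _)
      (nU n m (by rintro rfl; exact lt_irrefl _ hnm)) hnm (XY _ _) (YX _ _) (XY _ _) (YX _ _)
  have concl : ∀ a b a' b', R a b → R a' b' → ¬ R (d*a) (d*a') → ∀ i j k, a < X k → X k < a' → b' < Y k → Y k < b →
     X i < a → b < Y i → a' < X j → Y j < b' → False := by
    intro a b a' b' r r' nr i j k h1 h2 h3 h4 h5 h6 h7 h8
    have := XY j j
    refine nxy _ (h.strip (w := w) (ix _) (iy _) (uxy (φ (g k))) h1 h2 (by linarith) h3 h4 ?_ r r' nr ?_ ?_)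
    · have := YX i i; linarith
    · have := hw1 j; nlinarith
    · have := hw2 i; nlinarith
  rcases hg with hg | hg
  · have mono : StrictMono X := fun n m hnm => hg n m hnm
    have := fun n => (nst n (n+1) (mono (Nat.lt_succ_self n))).2
    choose a b r a1 a2 b1 b2 using this
    have anti : StrictAnti Y := strictAnti_nat_of_succ_lt (fun n => (nst n (n+1) (mono (Nat.lt_succ_self n))).1)
    have ha : StrictMono a := strictMono_nat_of_lt_succ (fun n => (a2 n).trans (a1 (n+1)))
    obtain ⟨i, hi, nr⟩ : ∃ i ≥ 1, ¬ R (d * a 0) (d * a i) := by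
      by_contra hc
      push Not at hc
      have hf := h.fin (d * a 0) (d*0) (d*2)
      refine Set.infinite_of_injective_forall_mem (f := fun i => d * a (i+1)) ?_ ?_ hf
      · intro i j hij
        have := mul_left_cancel₀ hd0.ne' hij
        have := ha.injective this
        omega
      · intro i
        refine ⟨hc _ (by omega), ?_, ?_⟩
        · exact mul_le_mul_of_nonneg_left (by linarith [a1 (i+1), x0 (φ (g (i+1)))]) hd0.le
        · exact mul_le_mul_of_nonneg_left (by linarith [a2 (i+1), x1 (φ (g (i+1+1)))]) hd0.le
    have e1 := mono.monotone hi
    have e2 := anti.antitone hi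
    exact concl _ _ _ _ (r 0) (r i) nr 0 (i+1) 1 (a2 0) (by linarith [a1 i]) (by linarith [b2 i]) (b1 0)
      (a1 0) (b2 0) (a2 i) (b1 i)
  · have anti : StrictAnti X := fun n m hnm => lt_of_le_of_ne (not_lt.1 (hg n m hnm)) (by
      intro he
      exact nU m n hnm.ne' (by rw [he]; exact U_refl _))
    have := fun n => (nst (n+1) n (anti (Nat.lt_succ_self n))).2
    choose a b r a1 a2 b1 b2 using this
    have mono : StrictMono Y := strictMono_nat_of_lt_succ (fun n => (nst (n+1) n (anti (Nat.lt_succ_self n))).1)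
    have ha : StrictAnti a := strictAnti_nat_of_succ_lt (fun n => (a2 (n+1)).trans (a1 n))
    obtain ⟨i, hi, nr⟩ : ∃ i ≥ 1, ¬ R (d * a 0) (d * a i) := by
      by_contra hc
      push Not at hc
      have hf := h.fin (d * a 0) (d*0) (d*2)
      refine Set.infinite_of_injective_forall_mem (f := fun i => d * a (i+1)) ?_ ?_ hf
      · intro i j hij
        have := mul_left_cancel₀ hd0.ne' hij
        have := ha.injective this
        omega
      · intro i
        refine ⟨hc _ (by omega), ?_, ?_⟩
        · exact mul_le_mul_of_nonneg_left (by linarith [a1 (i+1), x0 (φ (g (i+1+1)))]) hd0.le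
        · exact mul_le_mul_of_nonneg_left (by linarith [a2 (i+1), x1 (φ (g (i+1)))]) hd0.le
    have e1 := anti.antitone hi
    have e2 := mono.monotone hi
    exact concl _ _ _ _ (r i) (r 0) (fun hc => nr (h.symm _ _ hc)) (i+1) 0 1 (by linarith [a2 i]) (a1 0) (b2 0)
      (by linarith [b1 i]) (a1 i) (b2 i) (a2 0) (b1 0)

end RLam


namespace RLam
variable {d : ℕ} {R : ℝ → ℝ → Prop}

lemma U_mul_shift {p q : ℝ} (k l : ℤ) (hU : UU R (d*(p+k)) (d*(q+l))) : UU R (d*p) (d*q) := by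
  have := U_shiftr (U_shiftl hU (-(d*k))) (-(d*l))
  push_cast at this
  convert this using 1 <;> ring

lemma F0' (h : RLam d R) {s t : ℝ} (is : Irrational s) (it : Irrational t) (hU : UU R s t)
    (hb : ⌊d * Int.fract s⌋ = ⌊d * Int.fract t⌋) : UU R (d*s) (d*t) := by
  have key : ∀ s t : ℝ, Irrational s → Irrational t → UU R s t →
      ⌊d * Int.fract s⌋ = ⌊d * Int.fract t⌋ → Int.fract s ≤ Int.fract t → UU R (d*s) (d*t) := by
    intro s t is it hU hb hle
    have e3 := Int.abs_sub_lt_one_of_floor_eq_floor hb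
    rw [abs_lt] at e3
    have f1 : Int.fract s = s + ((-⌊s⌋ : ℤ) : ℝ) := by push_cast; rw [← Int.self_sub_floor]; ring
    have f2 : Int.fract t = t + ((-⌊t⌋ : ℤ) : ℝ) := by push_cast; rw [← Int.self_sub_floor]; ring
    apply U_mul_shift (-⌊s⌋) (-⌊t⌋)
    rcases hle.eq_or_lt with he | hl
    · rw [← f1, ← f2, he]; exact U_refl _
    · exact h.F0 ((irr_add_int _).2 is) ((irr_add_int _).2 it) (U_shiftr (U_shiftl hU _) _)
        (by rw [← f1, ← f2]; exact hl) (by rw [← f1, ← f2]; linarith)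
  rcases le_total (Int.fract s) (Int.fract t) with hl | hl
  · exact key s t is it hU hb hl
  · exact U_symm (key t s it is (U_symm hU) hb.symm hl)

lemma Weird_congr {s t : ℝ} (hU : UU R s t) (it : Irrational t) (hw : ¬ Weird d R s) :
    ¬ Weird d R t := by
  rintro ⟨r, ir, ur, nr⟩
  have h1 : UU R (d*s) (d*t) := by by_contra hc; exact hw ⟨t, it, hU, hc⟩
  have h2 : UU R (d*s) (d*r) := by by_contra hc; exact hw ⟨r, ir, U_trans hU ur, hc⟩
  exact nr (U_trans (U_symm h1) h2)

lemma notWeird {s t : ℝ} (hw : ¬ Weird d R s) (it : Irrational t) (hU : UU R s t) :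
    UU R (d*s) (d*t) := by by_contra hc; exact hw ⟨t, it, hU, hc⟩

lemma fract_bin (h : RLam d R) (s : ℝ) : ⌊d * Int.fract s⌋ ∈ Icc (0:ℤ) d := by
  have hd := h.dpos
  have h0 := Int.fract_nonneg s
  have h1 := Int.fract_lt_one s
  refine ⟨Int.floor_nonneg.2 (by positivity), ?_⟩
  refine Int.lt_add_one_iff.1 (Int.floor_lt.2 ?_); push_cast; nlinarith

lemma caseI (h : RLam d R) {u v : ℝ} (g : Good R u v) (iu : Irrational u) (iv : Irrational v)
    (H : ∀ N : ℕ, ∃ n ≥ N, Weird d R (d^n*u)) : False := by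
  have is := fun n => h.irr_pow iu n
  have ss : ∀ n : ℕ, (d:ℝ)^(n+1)*u = d*(d^n*u) := by intro n; ring
  let C : Set ℕ := {n | Weird d R (d^n*u) ∧ ∀ m < n, Weird d R (d^m*u) → ¬ UU R (d^m*u) (d^n*u)}
  have hC : C.Finite := by
    by_contra hc
    have hc : C.Infinite := hc
    let φ : ℕ → ℕ := Nat.nth (fun n => n ∈ C)
    have hφ : ∀ n, φ n ∈ C := fun n => Nat.nth_mem_of_infinite hc n
    have hφm : StrictMono φ := Nat.nth_strictMono hc
    refine h.F1 (fun n => d^(φ n)*u) (fun n => is _) (fun n => (hφ n).1) ?_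
    intro n m hnm hU
    rcases lt_or_gt_of_ne hnm with hl | hl
    · exact (hφ m).2 _ (hφm hl) (hφ n).1 hU
    · exact (hφ n).2 _ (hφm hl) (hφ m).1 (U_symm hU)
  have hcl : ∀ n : ℕ, Weird d R (d^n*u) → ∃ m ∈ C, UU R (d^m*u) (d^n*u) := by
    intro n
    induction n using Nat.strong_induction_on with
    | _ n ih =>
      intro hw
      by_cases hn : n ∈ C
      · exact ⟨n, hn, U_refl _⟩
      · simp only [C, mem_setOf_eq, not_and, not_forall, not_not] at hn
        obtain ⟨m, hm, hwm, hU⟩ := hn hw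
        obtain ⟨k, hk, hU'⟩ := ih m hm hwm
        exact ⟨k, hk, U_trans hU' hU⟩
  choose! c hcC hcU using hcl
  let key : ℕ → ℕ × ℤ := fun n => (c n, ⌊d * Int.fract ((d:ℝ)^n*u)⌋)
  let C' : Set ℕ := {n | Weird d R (d^n*u) ∧ ∀ m < n, Weird d R (d^m*u) → key m ≠ key n}
  have hC' : C'.Finite := by
    by_contra hc
    have hc : C'.Infinite := hc
    obtain ⟨n, hn, m, hm, hne, he⟩ := hc.exists_ne_map_eq_of_mapsTo (f := key) (t := C ×ˢ Icc (0:ℤ) d)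
      (fun n hn => ⟨hcC n hn.1, h.fract_bin _⟩) (hC.prod (finite_Icc _ _))
    rcases lt_or_gt_of_ne hne with hl | hl
    · exact hm.2 _ hl hn.1 he
    · exact hn.2 _ hl hm.1 he.symm
  have hcl' : ∀ n : ℕ, Weird d R (d^n*u) → ∃ m ∈ C', key m = key n := by
    intro n
    induction n using Nat.strong_induction_on with
    | _ n ih =>
      intro hw
      by_cases hn : n ∈ C'
      · exact ⟨n, hn, rfl⟩
      · simp only [C', mem_setOf_eq, not_and, not_forall, not_not, ne_eq] at hn
        obtain ⟨m, hm, hwm, hU⟩ := hn hw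
        obtain ⟨k, hk, hU'⟩ := ih m hm hwm
        exact ⟨k, hk, hU'.trans hU⟩
  choose ν hν1 hν2 using H
  obtain ⟨M0, hM0⟩ := (hC'.image (fun n => ν (n+1))).bddAbove
  let M := max M0 (ν 0)
  have inv : ∀ n : ℕ, ∃ m m', m ≤ m' ∧ m' ≤ M ∧ Weird d R (d^m'*u) ∧ UU R (d^n*u) (d^m*u) := by
    intro n
    induction n with
    | zero => exact ⟨0, ν 0, Nat.zero_le _, le_max_right _ _, hν2 0, U_refl _⟩
    | succ n ih =>
      by_cases hw : Weird d R (d^n*u)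
      · obtain ⟨ρ, hρ, hk⟩ := hcl' n hw
        refine ⟨ρ+1, ν (ρ+1), hν1 _, ?_, hν2 _, ?_⟩
        · exact (hM0 ⟨ρ, hρ, rfl⟩).trans (le_max_left _ _)
        · simp only [key, Prod.mk.injEq] at hk
          rw [ss, ss]
          refine h.F0' (is _) (is _) ?_ hk.2.symm
          have u1 := hcU n hw
          have u2 := hcU ρ hρ.1
          rw [hk.1] at u2
          exact U_trans (U_symm u1) u2
      · obtain ⟨m, m', h1, h2, h3, h4⟩ := ih
        have hne : m ≠ m' := by
          rintro rfl
          exact Weird_congr h4 (is _) hw h3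
        refine ⟨m+1, m', by omega, h2, h3, ?_⟩
        rw [ss, ss]
        exact notWeird hw (is _) h4
  refine h.NoFin g iu iv {m | m ≤ M} (finite_le_nat M) ?_
  intro n
  obtain ⟨m, m', h1, h2, h3, h4⟩ := inv n
  exact ⟨m, le_trans h1 h2, h4⟩

lemma caseII (h : RLam d R) {u v : ℝ} (g : Good R u v) (iu : Irrational u) (iv : Irrational v)
    {N : ℕ} (H : ∀ n ≥ N, ¬ Weird d R (d^n*u)) {n m : ℕ} (hN : N ≤ n) (hnm : n < m)
    (hU : UU R (d^n*u) (d^m*u)) : False := by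
  have is := fun n => h.irr_pow iu n
  have ss : ∀ n : ℕ, (d:ℝ)^(n+1)*u = d*(d^n*u) := by intro n; ring
  have step : ∀ j : ℕ, UU R (d^(n+j)*u) (d^(m+j)*u) := by
    intro j
    induction j with
    | zero => exact hU
    | succ j ih =>
      rw [← add_assoc, ← add_assoc, ss, ss]
      exact notWeird (H _ (by omega)) (is _) ih
  refine h.NoFin g iu iv {k | k ≤ m} (finite_le_nat m) ?_
  intro k
  induction k using Nat.strong_induction_on with
  | _ k ih =>
    by_cases hk : k ≤ m
    · exact ⟨k, hk, U_refl _⟩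
    · push Not at hk
      obtain ⟨j, rfl⟩ := Nat.exists_eq_add_of_lt hk
      obtain ⟨k', h1, h2⟩ := ih (n + (j+1)) (by omega)
      refine ⟨k', h1, U_trans (U_symm ?_) h2⟩
      exact step (j+1)

/-- infinitely many times, bounded real data: two times close -/
lemma close (S : Set ℕ) (hS : S.Infinite) (x y z : ℕ → ℝ) (M : ℝ) (hM : 0 < M) (B : ℝ)
    (hx : ∀ n ∈ S, |x n| ≤ B) (hy : ∀ n ∈ S, |y n| ≤ B) (hz : ∀ n ∈ S, |z n| ≤ B) (A : ℕ → ℤ × ℤ × ℤ)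
    (K : Set (ℤ × ℤ × ℤ)) (hK : K.Finite) (hA : ∀ n ∈ S, A n ∈ K) :
    ∃ n ∈ S, ∃ m ∈ S, n ≠ m ∧ M * |x n - x m| < 1 ∧ M * |y n - y m| < 1 ∧ M * |z n - z m| < 1 ∧ A n = A m := by
  have bd : ∀ r : ℝ, |r| ≤ B → ⌊M*r⌋ ∈ Icc (⌊-(M*B)⌋) (⌊M*B⌋) := by
    intro r hr
    rw [abs_le] at hr
    exact ⟨Int.floor_le_floor (by nlinarith), Int.floor_le_floor (by nlinarith)⟩
  obtain ⟨n, hn, m, hm, hne, he⟩ := hS.exists_ne_map_eq_of_mapsTo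
    (f := fun n => (⌊M * x n⌋, ⌊M * y n⌋, ⌊M * z n⌋, A n))
    (t := (Icc (⌊-(M*B)⌋) (⌊M*B⌋)) ×ˢ (Icc (⌊-(M*B)⌋) (⌊M*B⌋)) ×ˢ (Icc (⌊-(M*B)⌋) (⌊M*B⌋)) ×ˢ K)
    (fun n hn => ⟨bd _ (hx n hn), bd _ (hy n hn), bd _ (hz n hn), hA n hn⟩)
    ((finite_Icc _ _).prod ((finite_Icc _ _).prod ((finite_Icc _ _).prod hK)))
  simp only [Prod.mk.injEq] at he
  have cl : ∀ r s : ℝ, ⌊M*r⌋ = ⌊M*s⌋ → M * |r - s| < 1 := by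
    intro r s hrs
    have := Int.abs_sub_lt_one_of_floor_eq_floor hrs
    rwa [← mul_sub, abs_mul, abs_of_pos hM] at this
  exact ⟨n, hn, m, hm, hne, cl _ _ he.1, cl _ _ he.2.1, cl _ _ he.2.2.1, he.2.2.2⟩

/-- triple in a class -/
structure Tri (R : ℝ → ℝ → Prop) (x y z : ℝ) : Prop where
  ix : Irrational x
  iy : Irrational y
  iz : Irrational z
  uy : UU R x y
  uz : UU R x z
  xy : x < y
  yz : y < z
  zx : z < x + 1

lemma Tri.rot {x y z : ℝ} (t : Tri R x y z) : Tri R y z (x+1) where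
  ix := t.iy
  iy := t.iz
  iz := by have := (irr_add_int 1).2 t.ix; exact_mod_cast this
  uy := U_trans (U_symm t.uy) t.uz
  uz := by have := U_shiftr (U_symm t.uy) 1; exact_mod_cast this
  xy := t.yz
  yz := t.zx
  zx := by linarith [t.xy]

lemma Tri.shift {x y z : ℝ} (t : Tri R x y z) (k : ℤ) : Tri R (x+k) (y+k) (z+k) where
  ix := (irr_add_int k).2 t.ix
  iy := (irr_add_int k).2 t.iy
  iz := (irr_add_int k).2 t.iz
  uy := U_shiftr (U_shiftl t.uy k) k
  uz := U_shiftr (U_shiftl t.uz k) k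
  xy := by linarith [t.xy]
  yz := by linarith [t.yz]
  zx := by linarith [t.zx]

lemma link2 (h : RLam d R) {p q p' q' : ℝ} (ip : Irrational p) (iq : Irrational q)
    (ip' : Irrational p') (u : UU R p q) (u' : UU R p' q') (hn : ¬ UU R p p')
    (h1 : p < p') (h2 : p' < q) (h3 : q' < p + 1) : q' < q := by
  by_contra hc
  push Not at hc
  rcases hc.eq_or_lt with he | hl
  · subst he; exact hn (U_trans u (U_symm u'))
  · exact hn (h.unlU ip ip' iq h1 h2 hl h3 u u')

lemma sepTri (h : RLam d R) {x y z x' y' z' δ : ℝ} (t : Tri R x y z) (t' : Tri R x' y' z')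
    (hn : ¬ UU R x x') (hx : |x - x'| < δ) (hy : |y - y'| < δ) (hz : |z - z'| < δ)
    (g1 : 2*δ ≤ y - x) (g2 : 2*δ ≤ z - y) (g3 : 2*δ ≤ x + 1 - z) : False := by
  rw [abs_lt] at hx hy hz
  have nxx : x ≠ x' := by rintro rfl; exact hn (U_refl _)
  have nyy : y ≠ y' := by rintro rfl; exact hn (U_trans t.uy (U_symm t'.uy))
  have nzz : z ≠ z' := by rintro rfl; exact hn (U_trans t.uz (U_symm t'.uz))
  have hn' := fun hc => hn (U_symm hc)
  have uyz := U_trans (U_symm t.uy) t.uz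
  have uyz' := U_trans (U_symm t'.uy) t'.uz
  have ny : ¬ UU R y y' := fun hc => hn (U_trans t.uy (U_trans hc (U_symm t'.uy)))
  have ny' := fun hc => ny (U_symm hc)
  -- same sign pairs are linked
  rcases lt_or_gt_of_ne nxx with a | a <;> rcases lt_or_gt_of_ne nyy with b | b <;>
    rcases lt_or_gt_of_ne nzz with c | c
  · linarith [h.link2 t.ix t.iy t'.ix t.uy t'.uy hn a (by linarith) (by linarith)]
  · linarith [h.link2 t.ix t.iy t'.ix t.uy t'.uy hn a (by linarith) (by linarith)]
  · linarith [h.link2 t.ix t.iz t'.ix t.uz t'.uz hn a (by linarith) (by linarith)]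
  · linarith [h.link2 t'.iy t'.iz t.iy uyz' uyz ny' b (by linarith) (by linarith)]
  · linarith [h.link2 t.iy t.iz t'.iy uyz uyz' ny b (by linarith) (by linarith)]
  · linarith [h.link2 t'.ix t'.iz t.ix t'.uz t.uz hn' a (by linarith) (by linarith)]
  · linarith [h.link2 t'.ix t'.iy t.ix t'.uy t.uy hn' a (by linarith) (by linarith)]
  · linarith [h.link2 t'.ix t'.iy t.ix t'.uy t.uy hn' a (by linarith) (by linarith)]

def Rev (d : ℕ) (x y z : ℝ) : Prop := ⌊d*(y-x)⌋ + ⌊d*(z-y)⌋ + ⌊d*(x+1-z)⌋ = (d:ℤ) - 2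

lemma Rev.rot {x y z : ℝ} (r : Rev d x y z) : Rev d y z (x+1) := by
  unfold Rev at *
  have : y + 1 - (x + 1) = y - x := by ring
  rw [this]; omega

lemma Rev.two {x y z : ℝ} (r : Rev d x y z) : 1 + ⌊d*(y-x)⌋ + ⌊d*(z-y)⌋ < d*(z-x) := by
  unfold Rev at r
  have h1 := Int.lt_floor_add_one (d*(x+1-z))
  have h2 : ((⌊d*(y-x)⌋ + ⌊d*(z-y)⌋ + ⌊d*(x+1-z)⌋ : ℤ):ℝ) = (((d:ℤ) - 2 : ℤ):ℝ) := by rw [r]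
  push_cast at h2
  nlinarith

lemma Rev.two' (hd : 0 < (d:ℝ)) {x y z : ℝ} (r : Rev d x y z) (h1 : x < y) (h2 : y < z) : 1 < d*(z-x) := by
  have := r.two
  have e1 : (0:ℝ) ≤ ⌊d*(y-x)⌋ := by
    have : 0 ≤ ⌊d*(y-x)⌋ := Int.floor_nonneg.2 (by nlinarith)
    exact_mod_cast this
  have e2 : (0:ℝ) ≤ ⌊d*(z-y)⌋ := by
    have : 0 ≤ ⌊d*(z-y)⌋ := Int.floor_nonneg.2 (by nlinarith)
    exact_mod_cast this
  linarith

lemma revPair (h : RLam d R) {x y z x' y' z' δ : ℝ} (t : Tri R x y z) (t' : Tri R x' y' z')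
    (hn : ¬ UU R x x') (hδ : 10*d*δ ≤ 1) (hx : |x - x'| < δ) (hy : |y - y'| < δ) (hz : |z - z'| < δ)
    (r : Rev d x y z) (r' : Rev d x' y' z') (g2 : z - y < 4*δ)
    (f1 : ⌊d*(y-x)⌋ = ⌊d*(y'-x')⌋) (hlt : x < x') : False := by
  have hd := h.dpos
  have hd0 : (0:ℝ) < d := by linarith
  rw [abs_lt] at hx hy hz
  have δ0 : 0 < δ := by linarith
  have b1 := r.two' hd0 t.xy t.yz
  have b2 := r.rot.two' hd0 t.yz t.zx
  have c1 : 10*δ < z - x := by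
    by_contra hc
    push Not at hc
    nlinarith
  have c2 : 10*δ < x + 1 - y := by
    by_contra hc
    push Not at hc
    nlinarith
  have l1 := h.link2 t.ix t.iy t'.ix t.uy t'.uy hn hlt (by linarith) (by linarith)
  have l3 := h.link2 t.ix t.iy t'.ix t.uy t'.uz hn hlt (by linarith) (by linarith)
  have e1 := r'.two
  rw [← f1] at e1
  have e2 : (0:ℝ) ≤ ⌊d*(z'-y')⌋ := by
    have : 0 ≤ ⌊d*(z'-y')⌋ := Int.floor_nonneg.2 (by nlinarith [t'.yz])
    exact_mod_cast this
  have e3 := Int.lt_floor_add_one (d*(y-x))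
  nlinarith

lemma revPair' (h : RLam d R) {x y z x' y' z' δ : ℝ} (t : Tri R x y z) (t' : Tri R x' y' z')
    (hn : ¬ UU R x x') (hδ : 10*d*δ ≤ 1) (hx : |x - x'| < δ) (hy : |y - y'| < δ) (hz : |z - z'| < δ)
    (r : Rev d x y z) (r' : Rev d x' y' z') (g2 : z - y < 2*δ)
    (f1 : ⌊d*(y-x)⌋ = ⌊d*(y'-x')⌋) : False := by
  rcases lt_trichotomy x x' with hl | hl | hl
  · rw [abs_lt] at hx
    exact h.revPair t t' hn hδ (abs_lt.2 hx) hy hz r r' (by linarith) f1 hl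
  · subst hl; exact hn (U_refl _)
  · rw [abs_sub_comm] at hx hy hz
    refine h.revPair t' t (fun hc => hn (U_symm hc)) hδ hx hy hz r' r ?_ f1.symm hl
    rw [abs_lt] at hy hz; linarith

lemma revPairAll (h : RLam d R) {x y z x' y' z' δ : ℝ} (t : Tri R x y z) (t' : Tri R x' y' z')
    (hn : ¬ UU R x x') (hδ : 10*d*δ ≤ 1) (hx : |x - x'| < δ) (hy : |y - y'| < δ) (hz : |z - z'| < δ)
    (r : Rev d x y z) (r' : Rev d x' y' z') 
    (f1 : ⌊d*(y-x)⌋ = ⌊d*(y'-x')⌋) (f2 : ⌊d*(z-y)⌋ = ⌊d*(z'-y')⌋) 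
    (f3 : ⌊d*(x+1-z)⌋ = ⌊d*(x'+1-z')⌋) : False := by
  have hx1 : |x + 1 - (x' + 1)| < δ := by convert hx using 2; ring
  have hy1 : |y + 1 - (y' + 1)| < δ := by convert hy using 2; ring
  have ny : ¬ UU R y y' := fun hc => hn (U_trans t.uy (U_trans hc (U_symm t'.uy)))
  have nz : ¬ UU R z z' := fun hc => hn (U_trans t.uz (U_trans hc (U_symm t'.uz)))
  by_cases g2 : z - y < 2*δ
  · exact h.revPair' t t' hn hδ hx hy hz r r' g2 f1
  by_cases g3 : x + 1 - z < 2*δ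
  · exact h.revPair' t.rot t'.rot ny hδ hy hz hx1 r.rot r'.rot g3 f2
  by_cases g1 : y - x < 2*δ
  · exact h.revPair' t.rot.rot t'.rot.rot nz hδ hz hx1 hy1 r.rot.rot r'.rot.rot (by linarith) f3
  exact h.sepTri t t' hn hx hy hz (by linarith) (by linarith) (by linarith)

/-- E1 : eventually injective -/
lemma evInj (h : RLam d R) (s : ℕ → ℝ) (hs : ∀ n m, n ≠ m → ¬ UU R (s n) (s m)) :
    ∃ N, ∀ n ≥ N, ∀ x y, Irrational x → Irrational y → UU R (s n) x → UU R (s n) y → x < y →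
      y < x + 1 → ∀ k : ℤ, d*(y-x) ≠ k := by
  have hd := h.dpos
  have hd0 : (0:ℝ) < d := by linarith
  by_contra hc
  push Not at hc
  let S : Set ℕ := {n | ∃ x y, Irrational x ∧ Irrational y ∧ UU R (s n) x ∧ UU R (s n) y ∧ x < y ∧
    y < x + 1 ∧ 0 ≤ x ∧ x < 1 ∧ ∃ k : ℤ, d*(y-x) = k}
  have hS : S.Infinite := by
    rw [Set.infinite_iff_exists_gt]
    intro N
    obtain ⟨n, hn, x, y, ix, iy, ux, uy, h1, h2, k, hk⟩ := hc (N+1)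
    refine ⟨n, ⟨x + ((-⌊x⌋ : ℤ):ℝ), y + ((-⌊x⌋ : ℤ):ℝ), (irr_add_int _).2 ix, (irr_add_int _).2 iy, 
      U_shiftr ux _, U_shiftr uy _, by linarith, by linarith, ?_, ?_, k, by rw [← hk]; ring⟩, by omega⟩
    · push_cast; linarith [Int.floor_le x]
    · push_cast; linarith [Int.lt_floor_add_one x]
  have hS' : ∀ n ∈ S, ∃ x y, Irrational x ∧ Irrational y ∧ UU R (s n) x ∧ UU R (s n) y ∧ x < y ∧
    y < x + 1 ∧ 0 ≤ x ∧ x < 1 ∧ ∃ k : ℤ, d*(y-x) = k := fun n hn => hn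
  choose! x y ix iy ux uy h1 h2 h3 h4 k hk using hS'
  have hk1 : ∀ n ∈ S, 1 ≤ k n ∧ k n ≤ d - 1 := by
    intro n hn
    have e := hk n hn
    have a := h1 n hn
    have b := h2 n hn
    constructor
    · have : (0:ℝ) < k n := by rw [← e]; nlinarith
      have : 0 < k n := by exact_mod_cast this
      omega
    · have : (k n:ℝ) < ((d:ℤ):ℝ) := by rw [← e]; push_cast; nlinarith
      have : k n < d := by exact_mod_cast this
      omega
  obtain ⟨n, hn, m, hm, hne, hx, -, -, hA⟩ := close S hS x x x d hd0 1 
    (fun n hn => abs_le.2 ⟨by linarith [h3 n hn], by linarith [h4 n hn]⟩)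
    (fun n hn => abs_le.2 ⟨by linarith [h3 n hn], by linarith [h4 n hn]⟩)
    (fun n hn => abs_le.2 ⟨by linarith [h3 n hn], by linarith [h4 n hn]⟩)
    (fun n => (k n, 0, 0)) (Icc 1 ((d:ℤ)-1) ×ˢ {0} ×ˢ {0}) 
    ((finite_Icc _ _).prod ((finite_singleton _).prod (finite_singleton _)))
    (fun n hn => ⟨⟨(hk1 n hn).1, (hk1 n hn).2⟩, rfl, rfl⟩)
  simp only [Prod.mk.injEq, and_true] at hA
  have key : ∀ n m, n ∈ S → m ∈ S → n ≠ m → d * |x n - x m| < 1 → k n = k m → x n < x m → False := by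
    intro n m hn hm hne hx hA hl
    have e1 := hk n hn
    have e2 := hk m hm
    rw [← hA] at e2
    have := (hk1 n hn)
    have l1 : (1:ℝ) ≤ k n := by exact_mod_cast this.1
    have l2 : (k n:ℝ) ≤ ((d - 1 : ℤ):ℝ) := by exact_mod_cast this.2
    push_cast at l2
    have nU : ¬ UU R (x n) (x m) := fun hc => hs n m hne (U_trans (ux n hn) (U_trans hc (U_symm (ux m hm))))
    rw [abs_of_neg (by linarith)] at hx
    have hyy : y m - y n = x m - x n := by
      have : d*(y m - x m) = d*(y n - x n) := by rw [e1, e2]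
      have := mul_left_cancel₀ hd0.ne' this
      linarith
    have := h.link2 (ix n hn) (iy n hn) (ix m hm) (U_trans (U_symm (ux n hn)) (uy n hn))
      (U_trans (U_symm (ux m hm)) (uy m hm)) nU hl (by nlinarith) (by nlinarith)
    linarith
  rcases lt_trichotomy (x n) (x m) with hl | hl | hl
  · exact key n m hn hm hne hx hA hl
  · have a := ux n hn
    rw [hl] at a
    exact hs n m hne (U_trans a (U_symm (ux m hm)))
  · rw [abs_sub_comm] at hx
    exact key m n hm hn hne.symm hx hA.symm hl

/-- E2 : eventually no reversing triple -/
lemma evRev (h : RLam d R) (s : ℕ → ℝ) (hs : ∀ n m, n ≠ m → ¬ UU R (s n) (s m)) :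
    ∃ N, ∀ n ≥ N, ∀ x y z, UU R (s n) x → Tri R x y z → ¬ Rev d x y z := by
  have hd := h.dpos
  have hd0 : (0:ℝ) < d := by linarith
  by_contra hc
  push Not at hc
  let S : Set ℕ := {n | ∃ x y z, UU R (s n) x ∧ Tri R x y z ∧ Rev d x y z ∧ 0 ≤ x ∧ x < 1}
  have hS : S.Infinite := by
    rw [Set.infinite_iff_exists_gt]
    intro N
    obtain ⟨n, hn, x, y, z, ux, t, r⟩ := hc (N+1)
    refine ⟨n, ⟨x + ((-⌊x⌋ : ℤ):ℝ), y + ((-⌊x⌋ : ℤ):ℝ), z + ((-⌊x⌋ : ℤ):ℝ), U_shiftr ux _, t.shift _, ?_, ?_, ?_⟩, by omega⟩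
    · unfold Rev at *; rw [← r]; congr 3 <;> ring_nf
    · push_cast; linarith [Int.floor_le x]
    · push_cast; linarith [Int.lt_floor_add_one x]
  have hS' : ∀ n ∈ S, ∃ x y z, UU R (s n) x ∧ Tri R x y z ∧ Rev d x y z ∧ 0 ≤ x ∧ x < 1 := fun n hn => hn
  choose! x y z ux t r h0 h1 using hS'
  have fb : ∀ c : ℝ, 0 < c → c < 1 → ⌊d*c⌋ ∈ Icc (0:ℤ) d := by
    intro c c0 c1
    refine ⟨Int.floor_nonneg.2 (by nlinarith), ?_⟩
    refine Int.lt_add_one_iff.1 (Int.floor_lt.2 ?_); push_cast; nlinarith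
  obtain ⟨n, hn, m, hm, hne, hx, hy, hz, hA⟩ := close S hS x y z (10*d) (by linarith) 2
    (fun n hn => abs_le.2 ⟨by linarith [h0 n hn], by linarith [h1 n hn]⟩)
    (fun n hn => abs_le.2 ⟨by linarith [h0 n hn, (t n hn).xy], by linarith [h1 n hn, (t n hn).yz, (t n hn).zx]⟩)
    (fun n hn => abs_le.2 ⟨by linarith [h0 n hn, (t n hn).xy, (t n hn).yz], by linarith [h1 n hn, (t n hn).zx]⟩)
    (fun n => (⌊d*(y n-x n)⌋, ⌊d*(z n-y n)⌋, ⌊d*(x n+1-z n)⌋)) (Icc 0 (d:ℤ) ×ˢ Icc 0 (d:ℤ) ×ˢ Icc 0 (d:ℤ)) 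
    ((finite_Icc _ _).prod ((finite_Icc _ _).prod (finite_Icc _ _)))
    (fun n hn => by
      have a := (t n hn).xy
      have b := (t n hn).yz
      have c := (t n hn).zx
      exact ⟨fb _ (by linarith) (by linarith), fb _ (by linarith) (by linarith), fb _ (by linarith) (by linarith)⟩)
  simp only [Prod.mk.injEq] at hA
  have nU : ¬ UU R (x n) (x m) := fun hc => hs n m hne (U_trans (ux n hn) (U_trans hc (U_symm (ux m hm))))
  have cv : ∀ c : ℝ, 10*d*c < 1 → c < 1/(10*d) := by
    intro c hc
    rw [lt_div_iff₀ (by linarith)]; linarith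
  exact h.revPairAll (t n hn) (t m hm) nU (δ := 1/(10*d)) (by field_simp; norm_num) (cv _ hx) (cv _ hy) (cv _ hz)
    (r n hn) (r m hm) hA.1 hA.2.1 hA.2.2

/-- eventually no separated triple -/
lemma evSep (h : RLam d R) (s : ℕ → ℝ) (hs : ∀ n m, n ≠ m → ¬ UU R (s n) (s m)) {ε : ℝ} (hε : 0 < ε) :
    ∃ N, ∀ n ≥ N, ∀ x y z, UU R (s n) x → Tri R x y z → ε ≤ y - x → ε ≤ z - y → ε ≤ x + 1 - z → False := by
  by_contra hc
  push Not at hc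
  let S : Set ℕ := {n | ∃ x y z, UU R (s n) x ∧ Tri R x y z ∧ ε ≤ y - x ∧ ε ≤ z - y ∧ ε ≤ x + 1 - z ∧ 0 ≤ x ∧ x < 1}
  have hS : S.Infinite := by
    rw [Set.infinite_iff_exists_gt]
    intro N
    obtain ⟨n, hn, x, y, z, ux, t, r1, r2, r3⟩ := hc (N+1)
    refine ⟨n, ⟨x + ((-⌊x⌋ : ℤ):ℝ), y + ((-⌊x⌋ : ℤ):ℝ), z + ((-⌊x⌋ : ℤ):ℝ), U_shiftr ux _, t.shift _, by linarith, by linarith, by linarith, ?_, ?_⟩, by omega⟩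
    · push_cast; linarith [Int.floor_le x]
    · push_cast; linarith [Int.lt_floor_add_one x]
  have hS' : ∀ n ∈ S, ∃ x y z, UU R (s n) x ∧ Tri R x y z ∧ ε ≤ y - x ∧ ε ≤ z - y ∧ ε ≤ x + 1 - z ∧ 0 ≤ x ∧ x < 1 := fun n hn => hn
  choose! x y z ux t r1 r2 r3 h0 h1 using hS'
  obtain ⟨n, hn, m, hm, hne, hx, hy, hz, -⟩ := close S hS x y z (2/ε) (by positivity) 2
    (fun n hn => abs_le.2 ⟨by linarith [h0 n hn], by linarith [h1 n hn]⟩)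
    (fun n hn => abs_le.2 ⟨by linarith [h0 n hn, (t n hn).xy], by linarith [h1 n hn, (t n hn).yz, (t n hn).zx]⟩)
    (fun n hn => abs_le.2 ⟨by linarith [h0 n hn, (t n hn).xy, (t n hn).yz], by linarith [h1 n hn, (t n hn).zx]⟩)
    (fun n => (0,0,0)) {(0,0,0)} (finite_singleton _) (fun n hn => rfl)
  have nU : ¬ UU R (x n) (x m) := fun hc => hs n m hne (U_trans (ux n hn) (U_trans hc (U_symm (ux m hm))))
  have cv : ∀ c : ℝ, 2/ε*c < 1 → c < ε/2 := by
    intro c hc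
    have : 2/ε*c = 2*c/ε := by ring
    rw [this, div_lt_one hε] at hc
    linarith
  have a1 := r1 n hn
  have a2 := r2 n hn
  have a3 := r3 n hn
  exact h.sepTri (t n hn) (t m hm) nU (cv _ hx) (cv _ hy) (cv _ hz) (by linarith) (by linarith) (by linarith)

end RLam


namespace RLam
variable {d : ℕ} {R : ℝ → ℝ → Prop}

lemma inf_unit {s : ℝ} (hinf : ¬ LFin R s) :
    {t | Irrational t ∧ UU R s t ∧ 0 ≤ t ∧ t < 1}.Infinite := by
  intro hF
  apply hinf
  intro a b
  apply Set.Finite.subset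
    ((Set.finite_Icc ⌊a⌋ ⌊b⌋).biUnion (t := fun k : ℤ => (fun t : ℝ => t + k) '' {t | Irrational t ∧ UU R s t ∧ 0 ≤ t ∧ t < 1}) (fun k _ => hF.image _))
  rintro t ⟨it, ut, h1, h2⟩
  simp only [mem_iUnion]
  refine ⟨⌊t⌋, ⟨Int.floor_mono h1, Int.floor_mono h2⟩, t + ((-⌊t⌋ : ℤ):ℝ), ⟨(irr_add_int _).2 it, U_shiftr ut _, ?_, ?_⟩, ?_⟩
  · have := Int.floor_le t; push_cast; linarith
  · have := Int.lt_floor_add_one t; push_cast; linarith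
  · push_cast; ring

lemma fract_mul_fract (x : ℝ) : Int.fract ((d:ℝ) * Int.fract x) = Int.fract (d * x) := by
  have : (d:ℝ) * Int.fract x = d * x - ((d * ⌊x⌋ : ℤ) : ℝ) := by
    rw [← Int.self_sub_floor]; push_cast; ring
  rw [this, Int.fract_sub_intCast]

lemma fract_pos' {x : ℝ} (hx : ∀ k : ℤ, x ≠ k) : 0 < Int.fract x := by
  refine lt_of_le_of_ne (Int.fract_nonneg x) fun h0 => hx ⌊x⌋ ?_
  have := Int.self_sub_floor x
  linarith

lemma revstep {y z : ℝ} (h1 : ∀ k : ℤ, (d:ℝ) * y ≠ k) (h2 : ∀ k : ℤ, (d:ℝ) * (z-y) ≠ k)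
    (h3 : ∀ k : ℤ, (d:ℝ) * (1-z) ≠ k)
    (hr : ⌊(d:ℝ)*y⌋ + ⌊(d:ℝ)*(z-y)⌋ + ⌊(d:ℝ)*(1-z)⌋ ≠ (d:ℤ) - 2) :
    Int.fract ((d:ℝ)*y) < Int.fract ((d:ℝ)*z) := by
  have a1 := fract_pos' h1
  have a2 := fract_pos' h2
  have a3 := fract_pos' h3
  have b1 := Int.fract_lt_one ((d:ℝ)*y)
  have b2 := Int.fract_lt_one ((d:ℝ)*(z-y))
  have b3 := Int.fract_lt_one ((d:ℝ)*(1-z))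
  have e : Int.fract ((d:ℝ)*y) + Int.fract ((d:ℝ)*(z-y)) + Int.fract ((d:ℝ)*(1-z)) =
      (((d:ℤ) - (⌊(d:ℝ)*y⌋ + ⌊(d:ℝ)*(z-y)⌋ + ⌊(d:ℝ)*(1-z)⌋) : ℤ) : ℝ) := by
    rw [← Int.self_sub_floor, ← Int.self_sub_floor, ← Int.self_sub_floor]; push_cast; ring
  set k : ℤ := (d:ℤ) - (⌊(d:ℝ)*y⌋ + ⌊(d:ℝ)*(z-y)⌋ + ⌊(d:ℝ)*(1-z)⌋) with hk
  have k1 : (0:ℝ) < k := by linarith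
  have k2 : (k:ℝ) < 3 := by linarith
  have k1' : 0 < k := by exact_mod_cast k1
  have k2' : k < 3 := by exact_mod_cast k2
  have k3 : k = 1 := by omega
  rw [k3] at e
  push_cast at e
  have e2 : Int.fract ((d:ℝ)*z) = Int.fract ((d:ℝ)*y) + Int.fract ((d:ℝ)*(z-y)) := by
    rw [Int.fract_eq_iff]
    refine ⟨by linarith, by linarith, ⌊(d:ℝ)*y⌋ + ⌊(d:ℝ)*(z-y)⌋, ?_⟩
    rw [← Int.self_sub_floor, ← Int.self_sub_floor]; push_cast; ring
  linarith

structure Poly (d : ℕ) (R : ℝ → ℝ → Prop) (P : ℕ) (s c : ℕ → ℝ) (Z : ℕ → ℕ → ℝ) : Prop where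
  z0 : ∀ n, Z n 0 = 0
  zP : ∀ n, Z n P = 1
  mono : ∀ n i j, i < j → j ≤ P → Z n i < Z n j
  cs : ∀ n, c (n+1) = d * c n
  cong : ∀ n i, i ≤ P → ∃ k : ℤ, d * Z n i = Z (n+1) i + k
  irr : ∀ n i, i ≤ P → Irrational (c n + Z n i)
  uu : ∀ n i, i ≤ P → UU R (s n) (c n + Z n i)
  dist : ∀ n m, n ≠ m → ¬ UU R (s n) (s m)
  sep : ∀ ε > 0, ∃ N, ∀ n ≥ N, ∀ i j k, i < j → j < k → k < P → ε ≤ Z n j - Z n i → ε ≤ Z n k - Z n j →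
    ε ≤ 1 + Z n i - Z n k → False

lemma mkPoly (h : RLam d R) {u : ℝ} (iu : Irrational u) (hw : ∀ n, ¬ Weird d R (d^n*u))
    (hd : ∀ n m, n ≠ m → ¬ UU R (d^n*u) (d^m*u)) (hinf : ¬ LFin R u) (P : ℕ) (hP : 0 < P) :
    ∃ s c Z, Poly d R P s c Z := by
  obtain ⟨N1, E1⟩ := h.evInj (fun n => (d:ℝ)^n*u) hd
  obtain ⟨N2, E2⟩ := h.evRev (fun n => (d:ℝ)^n*u) hd
  set N := max N1 N2 with hN
  set s : ℕ → ℝ := fun n => (d:ℝ)^(N+n)*u with hs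
  have ss : ∀ n, s (n+1) = d * s n := by intro n; simp only [hs]; ring
  have E1' : ∀ n, ∀ x y, Irrational x → Irrational y → UU R (s n) x → UU R (s n) y → x < y →
      y < x + 1 → ∀ k : ℤ, d*(y-x) ≠ k := fun n => E1 (N+n) (by omega)
  have E2' : ∀ n, ∀ x y z, UU R (s n) x → Tri R x y z → ¬ Rev d x y z := fun n => E2 (N+n) (by omega)
  have hsd : ∀ n m, n ≠ m → ¬ UU R (s n) (s m) := fun n m hnm => hd _ _ (by omega)
  have hsw : ∀ n, ¬ Weird d R (s n) := fun n => hw _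
  have inf0 : ¬ LFin R (s 0) := by
    have := h.not_LFin_pow iu hinf N
    simpa [hs] using this
  obtain ⟨F, hF, hc⟩ := (inf_unit inf0).exists_subset_card_eq P
  set τ : ℕ → ℝ := fun i => if hi : i < P then F.orderEmbOfFin hc ⟨i, hi⟩ else 0 with hτ
  have τm : ∀ i < P, Irrational (τ i) ∧ UU R (s 0) (τ i) ∧ 0 ≤ τ i ∧ τ i < 1 := by
    intro i hi
    have : τ i ∈ F := by simp only [hτ, hi, dif_pos]; exact F.orderEmbOfFin_mem hc _
    exact hF this
  have τl : ∀ i j, i < j → j < P → τ i < τ j := by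
    intro i j hij hj
    have hi : i < P := by omega
    simp only [hτ, hi, hj, dif_pos]
    exact (F.orderEmbOfFin hc).strictMono (by simpa using hij)
  set c : ℕ → ℝ := fun n => (d:ℝ)^n * τ 0 with hcc
  set Z : ℕ → ℕ → ℝ := fun n i => if i < P then Int.fract ((d:ℝ)^n * (τ i - τ 0)) else 1 with hZ
  have Z0 : ∀ n, Z n 0 = 0 := by intro n; simp [hZ, hP]
  have ZP : ∀ n, Z n P = 1 := by intro n; simp [hZ]
  have Zi : ∀ n i, i < P → Z n i = Int.fract ((d:ℝ)^n * (τ i - τ 0)) := by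
    intro n i hi; simp [hZ, hi]
  have cong' : ∀ n i, i < P → Z (n+1) i = Int.fract (d * Z n i) := by
    intro n i hi
    rw [Zi _ _ hi, Zi _ _ hi, fract_mul_fract]; congr 1; ring
  have lift : ∀ n i, i < P → ∃ k : ℤ, c n + Z n i = (d:ℝ)^n * τ i + k := by
    intro n i hi
    refine ⟨-⌊(d:ℝ)^n * (τ i - τ 0)⌋, ?_⟩
    rw [Zi _ _ hi, ← Int.self_sub_floor]; simp only [hcc]; push_cast; ring
  have ups : ∀ n i, i < P → Irrational ((d:ℝ)^n * τ i) ∧ UU R (s n) ((d:ℝ)^n * τ i) := by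
    intro n i hi
    refine ⟨h.irr_pow (τm i hi).1 n, ?_⟩
    induction n with
    | zero => simpa using (τm i hi).2.1
    | succ n ih =>
      rw [ss, show (d:ℝ)^(n+1) * τ i = d * ((d:ℝ)^n * τ i) by ring]
      exact notWeird (hsw n) (h.irr_pow (τm i hi).1 n) ih
  have irr' : ∀ n i, i ≤ P → Irrational (c n + Z n i) ∧ UU R (s n) (c n + Z n i) := by
    have : ∀ n i, i < P → Irrational (c n + Z n i) ∧ UU R (s n) (c n + Z n i) := by
      intro n i hi
      obtain ⟨k, hk⟩ := lift n i hi
      rw [hk]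
      exact ⟨(irr_add_int _).2 (ups n i hi).1, U_shiftr (ups n i hi).2 _⟩
    intro n i hi
    rcases hi.lt_or_eq with hl | rfl
    · exact this n i hl
    · have h0 := this n 0 hP
      rw [Z0, add_zero] at h0
      rw [ZP]
      exact ⟨by have := (irr_add_int 1).2 h0.1; exact_mod_cast this,
        by have := U_shiftr h0.2 1; exact_mod_cast this⟩
  have Zlt : ∀ n i, i < P → Z n i < 1 := by
    intro n i hi; rw [Zi _ _ hi]; exact Int.fract_lt_one _
  have mono' : ∀ n i j, i < j → j < P → Z n i < Z n j := by
    intro n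
    induction n with
    | zero =>
      intro i j hij hj
      have hi : i < P := by omega
      have a : ∀ i < P, Z 0 i = τ i - τ 0 := by
        intro i hi
        rw [Zi _ _ hi, Int.fract_eq_self.2]; · ring
        have := (τm i hi).2.2
        have := (τm 0 hP).2.2
        have h5 : τ 0 ≤ τ i := by
          rcases Nat.eq_zero_or_pos i with rfl | h0
          · exact le_rfl
          · exact (τl 0 i h0 hi).le
        constructor <;> simp <;> linarith
      rw [a i hi, a j hj]
      linarith [τl i j hij hj]
    | succ n ih =>
      intro i j hij hj
      have hi : i < P := by omega
      have I := fun i hi => (irr' n i hi).1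
      have W := fun i hi => (irr' n i hi).2
      have non : ∀ i j, i < j → j < P → ∀ k : ℤ, (d:ℝ) * (Z n j - Z n i) ≠ k := by
        intro i j hij hj k hk
        have z1 := Zlt n j hj
        have z2 : 0 ≤ Z n i := by rw [Zi _ _ (by omega)]; exact Int.fract_nonneg _
        refine E1' n (c n + Z n i) (c n + Z n j) (I _ (by omega)) (I _ hj.le) (W _ (by omega)) (W _ hj.le)
          (by linarith [ih i j hij hj]) (by linarith) k ?_
        rw [← hk]; ring
      rcases Nat.eq_zero_or_pos i with rfl | h0
      · rw [Z0, cong' n j hj]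
        apply fract_pos'
        have := non 0 j hij hj
        rwa [Z0, sub_zero] at this
      · rw [cong' n j hj, cong' n i hi]
        have zi := ih 0 i h0 hi
        have zij := ih i j hij hj
        have zj := Zlt n j hj
        rw [Z0] at zi
        apply revstep
        · have := non 0 i h0 hi
          rwa [Z0, sub_zero] at this
        · exact non i j hij hj
        · intro k hk
          have := non 0 j (by omega) hj (d - k)
          rw [Z0] at this
          apply this
          push_cast; rw [← hk]; ring
        · have c0 : c n = c n + Z n 0 := by rw [Z0, add_zero]
          have := E2' n (c n) (c n + Z n i) (c n + Z n j) (by rw [c0]; exact W 0 hP.le)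
            { ix := by rw [c0]; exact I 0 hP.le
              iy := I i hi.le
              iz := I j hj.le
              uy := U_trans (U_symm (by rw [c0]; exact W 0 hP.le)) (W i hi.le)
              uz := U_trans (U_symm (by rw [c0]; exact W 0 hP.le)) (W j hj.le)
              xy := by linarith
              yz := by linarith
              zx := by linarith }
          unfold Rev at this
          have r1 : c n + Z n i - c n = Z n i := by ring
          have r2 : c n + Z n j - (c n + Z n i) = Z n j - Z n i := by ring
          have r3 : c n + 1 - (c n + Z n j) = 1 - Z n j := by ring
          rwa [r1, r2, r3] at this
  refine ⟨s, c, Z, Z0, ZP, ?_, ?_, ?_, fun n i hi => (irr' n i hi).1, fun n i hi => (irr' n i hi).2, hsd, ?_⟩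
  · intro n i j hij hj
    rcases hj.lt_or_eq with hl | rfl
    · exact mono' n i j hij hl
    · rw [ZP]; exact Zlt n i hij
  · intro n; simp only [hcc]; ring
  · intro n i hi
    rcases hi.lt_or_eq with hl | rfl
    · refine ⟨⌊d * Z n i⌋, ?_⟩
      rw [cong' n i hl, Int.fract_add_floor]
    · refine ⟨d - 1, ?_⟩
      rw [ZP, ZP]; push_cast; ring
  · intro ε hε
    obtain ⟨M, hM⟩ := h.evSep s hsd hε
    refine ⟨M, fun n hn i j k hij hjk hk a1 a2 a3 => ?_⟩
    have I := fun i hi => (irr' n i hi).1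
    have W := fun i hi => (irr' n i hi).2
    have zi : 0 ≤ Z n i := by rw [Zi _ _ (by omega)]; exact Int.fract_nonneg _
    have hi : i ≤ P := by omega
    have hj : j ≤ P := by omega
    refine hM n hn (c n + Z n i) (c n + Z n j) (c n + Z n k) (W i hi)
      ⟨I i hi, I j hj, I k hk.le, U_trans (U_symm (W i hi)) (W j hj), U_trans (U_symm (W i hi)) (W k hk.le), ?_, ?_, ?_⟩ ?_ ?_ ?_
    · linarith
    · linarith
    · linarith [Zlt n k hk]
    · linarith
    · linarith
    · linarith

end RLam


namespace RLam
namespace Poly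
variable {d : ℕ} {R : ℝ → ℝ → Prop} {P : ℕ} {s c : ℕ → ℝ} {Z : ℕ → ℕ → ℝ}

def len (Z : ℕ → ℕ → ℝ) (n i : ℕ) : ℝ := Z n (i+1) - Z n i

lemma len_pos (p : Poly d R P s c Z) {n i : ℕ} (hi : i < P) : 0 < len Z n i := by
  have := p.mono n i (i+1) (by omega) (by omega)
  unfold len; linarith

lemma mono' (p : Poly d R P s c Z) {n i j : ℕ} (hi : i ≤ j) (hj : j ≤ P) : Z n i ≤ Z n j := by
  rcases hi.eq_or_lt with rfl | hl
  · exact le_rfl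
  · exact (p.mono n i j hl hj).le

lemma nonneg (p : Poly d R P s c Z) {n i : ℕ} (hi : i ≤ P) : 0 ≤ Z n i := by
  have := p.mono' (n := n) (Nat.zero_le i) hi
  rwa [p.z0] at this

lemma le_one (p : Poly d R P s c Z) {n i : ℕ} (hi : i ≤ P) : Z n i ≤ 1 := by
  have := p.mono' (n := n) hi le_rfl
  rwa [p.zP] at this

lemma len_sum (p : Poly d R P s c Z) (n : ℕ) : ∑ i ∈ Finset.range P, len Z n i = 1 := by
  unfold len
  rw [Finset.sum_range_sub (fun i => Z n i), p.z0, p.zP, sub_zero]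

lemma len_two (p : Poly d R P s c Z) {n i j : ℕ} (hi : i < P) (hj : j < P) (hij : i ≠ j) :
    len Z n i + len Z n j ≤ 1 := by
  rw [← p.len_sum n]
  rw [← Finset.sum_pair hij]
  apply Finset.sum_le_sum_of_subset_of_nonneg
  · intro k hk; simp at hk ⊢; omega
  · intro k hk _; simp at hk; exact (p.len_pos hk).le

lemma len_lt (p : Poly d R P s c Z) (hP : 2 ≤ P) {n i : ℕ} (hi : i < P) : len Z n i < 1 := by
  obtain ⟨j, hj, hij⟩ : ∃ j, j < P ∧ i ≠ j := by
    rcases Nat.eq_zero_or_pos i with rfl | h0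
    · exact ⟨1, by omega, by omega⟩
    · exact ⟨0, by omega, by omega⟩
  have := p.len_two (n := n) hi hj hij
  linarith [p.len_pos (n := n) hj]

lemma len_step (p : Poly d R P s c Z) {n i : ℕ} (hi : i < P) :
    ∃ k : ℤ, d * len Z n i = len Z (n+1) i + k := by
  obtain ⟨k, hk⟩ := p.cong n i hi.le
  obtain ⟨l, hl⟩ := p.cong n (i+1) hi
  refine ⟨l - k, ?_⟩
  unfold len; push_cast; rw [mul_sub, hk, hl]; ring

lemma len_small (p : Poly d R P s c Z) (hP : 2 ≤ P) {n i : ℕ} (hi : i < P) (hs : d * len Z n i ≤ 1)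
    (hd : 2 ≤ d) : len Z (n+1) i = d * len Z n i := by
  obtain ⟨k, hk⟩ := p.len_step (n := n) hi
  have h1 := p.len_pos (n := n+1) hi
  have h2 := p.len_lt hP (n := n+1) hi
  have h3 := p.len_pos (n := n) hi
  have hd0 : (2:ℝ) ≤ d := by exact_mod_cast hd
  have : k = 0 := by
    have a1 : (k:ℝ) < 1 := by linarith
    have a2 : (-1:ℝ) < k := by nlinarith
    have a1' : k < 1 := by exact_mod_cast a1
    have a2' : -1 < k := by exact_mod_cast a2
    omega
  rw [hk, this]; simp

lemma grow (p : Poly d R P s c Z) (hP : 2 ≤ P) {n i : ℕ} (hi : i < P)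
    (hd : 2 ≤ d) (H : ∀ m ≥ n, d * len Z m i ≤ 1) : False := by
  have hd0 : (2:ℝ) ≤ d := by exact_mod_cast hd
  have key : ∀ k, len Z (n+k) i = (d:ℝ)^k * len Z n i := by
    intro k
    induction k with
    | zero => simp
    | succ k ih => rw [← add_assoc, p.len_small hP hi (H _ (by omega)) hd, ih]; ring
  have h3 := p.len_pos (n := n) hi
  obtain ⟨k, hk⟩ := pow_unbounded_of_one_lt (1 / len Z n i) (show (1:ℝ) < d by linarith)
  rw [div_lt_iff₀ h3, ← key] at hk
  linarith [p.len_lt hP (n := n+k) hi]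

lemma sup_len (p : Poly d R P s c Z) (hP : 3 ≤ P) (hd : 2 ≤ d) {η : ℝ} (hη : 0 < η) :
    ∃ n, ∃ k < P, 1 - η < len Z n k := by
  by_contra hc
  push Not at hc
  have hd0 : (2:ℝ) ≤ d := by exact_mod_cast hd
  have hP0 : (3:ℝ) ≤ P := by exact_mod_cast hP
  have η1 : η < 1 := by
    have := hc 0 0 (by omega)
    linarith [p.len_pos (n := 0) (show 0 < P by omega)]
  have hPd : (0:ℝ) < P * d := by positivity
  obtain ⟨ε, hε⟩ : ∃ ε, ε = η / (P*d) := ⟨_, rfl⟩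
  have e0 : 0 < ε := by rw [hε]; positivity
  have e1 : P * d * ε = η := by rw [hε]; field_simp
  obtain ⟨N, hN⟩ := p.sep ε e0
  have A : ∀ n ≥ N, ∀ i j k, i < j → j < k → k < P → ε ≤ len Z n i → ε ≤ len Z n j → ε ≤ len Z n k → False := by
    intro n hn i j k hij hjk hk a1 a2 a3
    have b1 := p.mono' (n := n) (show i + 1 ≤ j by omega) (by omega)
    have b2 := p.mono' (n := n) (show j + 1 ≤ k by omega) (by omega)
    have b3 := p.le_one (n := n) (show k + 1 ≤ P by omega)
    have b4 := p.nonneg (n := n) (show i ≤ P by omega)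
    unfold len at *
    exact hN n hn i j k hij hjk hk (by linarith) (by linarith) (by linarith)
  have A' : ∀ n ≥ N, ∀ i j k, i < P → j < P → k < P → i ≠ j → j ≠ k → i ≠ k → ε ≤ len Z n i → ε ≤ len Z n j → ε ≤ len Z n k → False := by
    intro n hn i j k hi hj hk hij hjk hik a1 a2 a3
    rcases lt_or_gt_of_ne hij with h1 | h1 <;> rcases lt_or_gt_of_ne hjk with h2 | h2 <;>
      rcases lt_or_gt_of_ne hik with h3 | h3
    · exact A n hn i j k h1 h2 hk a1 a2 a3
    · omega
    · exact A n hn i k j h3 h2 hj a1 a3 a2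
    · exact A n hn k i j h3 h1 hj a3 a1 a2
    · exact A n hn j i k h1 h3 hk a2 a1 a3
    · exact A n hn j k i h2 h3 hi a2 a3 a1
    · omega
    · exact A n hn k j i h2 h1 hi a3 a2 a1
  have B : ∀ n ≥ N, ∀ i < P, len Z n i < d * ε → len Z n i < ε := by
    intro n hn i hi hl
    by_contra hge
    push Not at hge
    obtain ⟨j, hj, hij, hrest⟩ : ∃ j, j < P ∧ i ≠ j ∧ ∀ k < P, k ≠ i → k ≠ j → len Z n k ≤ ε := by
      by_cases hx : ∃ j, j < P ∧ i ≠ j ∧ ε ≤ len Z n j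
      · obtain ⟨j, hj, hij, hjl⟩ := hx
        refine ⟨j, hj, hij, fun k hk k1 k2 => ?_⟩
        by_contra hkk
        push Not at hkk
        exact A' n hn i j k hi hj hk hij k2.symm k1.symm hge hjl hkk.le
      · push Not at hx
        obtain ⟨j, hj, hij⟩ : ∃ j, j < P ∧ i ≠ j := by
          rcases Nat.eq_zero_or_pos i with rfl | h0
          · exact ⟨1, by omega, by omega⟩
          · exact ⟨0, by omega, by omega⟩
        exact ⟨j, hj, hij, fun k hk k1 k2 => (hx k hk k1.symm).le⟩
    have sm := p.len_sum n
    have mj : j ∈ (Finset.range P).erase i := by simp [hj, hij.symm]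
    rw [← Finset.add_sum_erase _ _ (Finset.mem_range.2 hi), ← Finset.add_sum_erase _ _ mj] at sm
    have bd : ∑ k ∈ ((Finset.range P).erase i).erase j, len Z n k ≤ (P-2) * ε := by
      have := Finset.sum_le_card_nsmul (((Finset.range P).erase i).erase j) (fun k => len Z n k) ε (by
        intro k hk; simp at hk; exact hrest k hk.2.2 hk.2.1 hk.1)
      rw [Finset.card_erase_of_mem mj, Finset.card_erase_of_mem (Finset.mem_range.2 hi), Finset.card_range] at this
      have e : ((P - 1 - 1 : ℕ):ℝ) = P - 2 := by
        rw [Nat.sub_sub]; push_cast [show 1 + 1 ≤ P by omega]; ring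
      rw [nsmul_eq_mul, e] at this
      exact this
    have := hc n j hj
    nlinarith [mul_nonneg (mul_nonneg (show (0:ℝ) ≤ d - 1 by linarith) (show (0:ℝ) ≤ P - 1 by linarith)) e0.le]
  obtain ⟨i, hi, hil⟩ : ∃ i < P, len Z N i < ε := by
    by_contra hx
    push Not at hx
    exact A N le_rfl 0 1 2 (by omega) (by omega) (by omega) (hx _ (by omega)) (hx _ (by omega)) (hx _ (by omega))
  have dε : d * ε ≤ 1 := by nlinarith [mul_pos (show (0:ℝ) < d by linarith) e0]
  have all : ∀ k, len Z (N+k) i < ε := by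
    intro k
    induction k with
    | zero => simpa using hil
    | succ k ih =>
      have : d * len Z (N+k) i < d * ε := by apply mul_lt_mul_of_pos_left ih; linarith
      apply B _ (by omega) i hi
      rw [← add_assoc, p.len_small (by omega) hi (by linarith) hd]
      exact this
  apply p.grow (n := N) (by omega) hi hd
  intro m hm
  obtain ⟨k, rfl⟩ := Nat.exists_eq_add_of_le hm
  have : d * len Z (N+k) i < d * ε := by apply mul_lt_mul_of_pos_left (all k); linarith
  linarith

lemma last (p : Poly d R P s c Z) (hP : 2 ≤ P) (hd : 2 ≤ d) {i : ℕ} (hi : i < P) (r : ℕ)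
    (H : ∃ n < r, 1 < d * len Z n i) : ∃ n < r, 1 < d * len Z n i ∧ len Z (n+1) i ≤ len Z r i := by
  have hd0 : (2:ℝ) ≤ d := by exact_mod_cast hd
  induction r with
  | zero => obtain ⟨n, hn, _⟩ := H; omega
  | succ r ih =>
    by_cases hr : 1 < d * len Z r i
    · exact ⟨r, by omega, hr, le_rfl⟩
    · obtain ⟨n, hn, hl⟩ := H
      have : n ≠ r := by rintro rfl; exact hr hl
      obtain ⟨n, hn, h1, h2⟩ := ih ⟨n, by omega, hl⟩
      refine ⟨n, by omega, h1, ?_⟩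
      rw [p.len_small hP hi (not_lt.1 hr) hd]
      nlinarith [p.len_pos (n := r) hi]

set_option maxHeartbeats 1000000 in
lemma core (h : RLam d R) (p : Poly d R P s c Z) (hP : 2 ≤ P) {n m i j : ℕ} (hi : i < P) (hj : j < P)
    (hij : i ≠ j) (k w : ℤ) {η η' ρ : ℝ} (ha : c n + Z n i ≤ c m + Z m j + k)
    (ha' : 4 * d * (c m + Z m j + k - (c n + Z n i)) < 1)
    (h1 : d * len Z n i = w + η) (h2 : d * len Z m j = w + η') (hw : 1 ≤ w)
    (hη : 0 < η) (hη' : 0 < η') (hη4 : η' < 1/4) (hρ : η ≤ ρ) (ρ1 : ρ < 1)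
    (big : ∀ k < P, len Z (m+1) k ≤ 1 - ρ) : False := by
  have hd := h.dpos
  have hd0 : (0:ℝ) < d := by linarith
  have hw' : (1:ℝ) ≤ w := by exact_mod_cast hw
  have ln := p.len_lt hP (n := n) hi
  have lm := p.len_lt hP (n := m) hj
  by_cases hnm : n = m
  · subst hnm
    have q1 : c n + Z n j + k - (c n + Z n i) = Z n j - Z n i + k := by ring
    rw [q1] at ha'
    have g1 : 1 < d * len Z n i := by linarith
    have g2 : 1 < d * len Z n j := by linarith
    have pi := p.nonneg (n := n) hi.le
    have pj := p.nonneg (n := n) hj.le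
    have pi1 := p.le_one (n := n) (show i + 1 ≤ P by omega)
    have pj1 := p.le_one (n := n) (show j + 1 ≤ P by omega)
    have hk : -1 ≤ k ∧ k ≤ 1 := by
      have t1 : (-2:ℝ) < k := by unfold len at *; nlinarith
      have t2 : (k:ℝ) < 2 := by unfold len at *; nlinarith
      have t1' : -2 < k := by exact_mod_cast t1
      have t2' : k < 2 := by exact_mod_cast t2
      omega
    have hk3 : k = -1 ∨ k = 0 ∨ k = 1 := by omega
    rcases lt_or_gt_of_ne hij with hl | hl
    · have := p.mono' (n := n) (show i + 1 ≤ j by omega) hj.le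
      unfold len at *
      rcases hk3 with rfl | rfl | rfl <;> push_cast at * <;> nlinarith
    · have := p.mono' (n := n) (show j + 1 ≤ i by omega) hi.le
      unfold len at *
      rcases hk3 with rfl | rfl | rfl <;> push_cast at * <;> nlinarith
  have hns := p.dist n m hnm
  set a := c n + Z n i with hadef
  set a' := c m + Z m j + k with hadef'
  have ia : Irrational a := p.irr n i hi.le
  have ua : UU R (s n) a := p.uu n i hi.le
  have ia' : Irrational a' := (irr_add_int k).2 (p.irr m j hj.le)
  have ua' : UU R (s m) a' := U_shiftr (p.uu m j hj.le) k
  have ib : Irrational (a + len Z n i) := by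
    have := p.irr n (i+1) hi
    convert this using 1
    simp only [hadef, len]; ring
  have ub : UU R (s n) (a + len Z n i) := by
    have := p.uu n (i+1) hi
    convert this using 1
    simp only [hadef, len]; ring
  have sepc : ∀ x, UU R (s m) x → ∀ l : ℤ, x ≠ a + l := by
    rintro x hx l rfl
    exact hns (U_trans (U_shiftr ua l) (U_symm hx))
  have hlt : a < a' := by
    refine lt_of_le_of_ne ha fun he => sepc a' ua' 0 ?_
    rw [he]; simp
  have nU : ¬ UU R a a' := fun hU => hns (U_trans (U_trans ua hU) (U_symm ua'))
  have b'' : a' < a + len Z n i := by nlinarith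
  have lk : ∀ q', UU R (s m) q' → q' < a + 1 → q' < a + len Z n i := by
    intro q' hq hq1
    exact h.link2 ia ib ia' (U_trans (U_symm ua) ub) (U_trans (U_symm ua') hq) nU hlt b'' hq1
  have ub' : UU R (s m) (a' + len Z m j) := by
    have := U_shiftr (p.uu m (j+1) hj) k
    convert this using 1
    simp only [hadef', len]; ring
  have wd : (w:ℝ) ≤ d - 1 := by
    have t : (w:ℝ) < d := by nlinarith
    have t' : w < (d:ℤ) := by exact_mod_cast t
    have t'' : w ≤ (d:ℤ) - 1 := by omega
    exact_mod_cast t''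
  have bb : a' + len Z m j < a + len Z n i := by
    apply lk _ ub'
    nlinarith
  have M0 : d * a < d * a' := mul_lt_mul_of_pos_left hlt hd0
  have M3 : d * (a' + len Z m j) < d * (a + len Z n i) := mul_lt_mul_of_pos_left bb hd0
  rw [mul_add, mul_add] at M3
  have pts : ∀ q ≤ P, ∃ l : ℤ, d * a < c (m+1) + Z (m+1) q + l ∧ c (m+1) + Z (m+1) q + l < d * a + η := by
    intro q hq
    obtain ⟨y, l, hy, hyl, hy1, hy2⟩ : ∃ y : ℝ, ∃ l : ℤ, UU R (s m) y ∧ y = c m + Z m q + l ∧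
        a' + len Z m j ≤ y ∧ y ≤ a' + 1 := by
      rcases le_or_gt q j with hl | hl
      · refine ⟨c m + Z m q + (k+1 : ℤ), k+1, U_shiftr (p.uu m q hq) _, rfl, ?_, ?_⟩
        · have t1 := p.nonneg (n := m) hq
          have t2 := p.le_one (n := m) (show j + 1 ≤ P by omega)
          simp only [hadef', len]; push_cast; linarith
        · have t1 := p.mono' (n := m) hl hj.le
          simp only [hadef']; push_cast; linarith
      · refine ⟨c m + Z m q + (k : ℤ), k, U_shiftr (p.uu m q hq) _, rfl, ?_, ?_⟩
        · have t1 := p.mono' (n := m) (show j + 1 ≤ q by omega) hq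
          simp only [hadef', len]; push_cast; linarith
        · have t1 := p.nonneg (n := m) hj.le
          have t2 := p.le_one (n := m) hq
          simp only [hadef']; linarith
    obtain ⟨e, he⟩ := p.cong m q hq
    have dy : d * y = c (m+1) + Z (m+1) q + ((e + d * l : ℤ):ℝ) := by
      rw [hyl, p.cs m]; push_cast; linear_combination he
    have M1 : d * (a' + len Z m j) ≤ d * y := mul_le_mul_of_nonneg_left hy1 hd0.le
    have M5 : d * y ≤ d * (a' + 1) := mul_le_mul_of_nonneg_left hy2 hd0.le
    rw [mul_add] at M1 M5
    rcases lt_trichotomy y (a+1) with hc | hc | hc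
    · have := lk y hy hc
      have M2 : d * y < d * (a + len Z n i) := mul_lt_mul_of_pos_left this hd0
      rw [mul_add] at M2
      refine ⟨e + d * l - w, ?_, ?_⟩
      · push_cast at dy ⊢; linarith
      · push_cast at dy ⊢; linarith
    · exact absurd hc (by have := sepc y hy 1; exact_mod_cast this)
    · have M4 : d * (a + 1) < d * y := mul_lt_mul_of_pos_left hc hd0
      rw [mul_add] at M4
      refine ⟨e + d * l - d, ?_, ?_⟩
      · push_cast at dy ⊢; linarith
      · push_cast at dy ⊢; linarith
  obtain ⟨l0, q1, q2⟩ := pts 0 (by omega)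
  rw [p.z0] at q1 q2
  -- discrete intermediate value
  have div : ∃ q < P, c (m+1) + Z (m+1) q + l0 < d * a + η ∧ ¬ c (m+1) + Z (m+1) (q+1) + l0 < d * a + η := by
    by_contra hc
    push Not at hc
    have all : ∀ q ≤ P, c (m+1) + Z (m+1) q + l0 < d * a + η := by
      intro q
      induction q with
      | zero => intro _; rw [p.z0]; exact q2
      | succ q ih => intro hq; exact hc q (by omega) (ih (by omega))
    have := all P le_rfl
    rw [p.zP] at this
    linarith
  obtain ⟨q, hq, r1, r2⟩ := div
  push Not at r2
  obtain ⟨l, s1, s2⟩ := pts (q+1) hq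
  have ll : l < l0 := by
    have : (l:ℝ) < l0 := by linarith
    exact_mod_cast this
  have ll' : (l:ℝ) + 1 ≤ l0 := by exact_mod_cast ll
  have := big q hq
  unfold len at this
  linarith

lemma false_of (h : RLam d R) (p : Poly d R P s c Z) (hP : 4 * d * d + 3 ≤ P) : False := by
  have hd := h.dpos
  have hd0 : (0:ℝ) < d := by linarith
  have hd2 : 2 ≤ d := by exact_mod_cast hd
  have ex : ∀ i, ∃ n, i < P → 1 < d * len Z n i := by
    intro i
    by_contra hc
    push Not at hc
    exact p.grow (n := 0) (by omega) (hc 0).1 hd2 (fun m _ => (hc m).2)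
  choose t ht using ex
  set r0 := (Finset.range P).sup t with hr0
  have htr : ∀ i < P, t i ≤ r0 := fun i hi => Finset.le_sup (Finset.mem_range.2 hi)
  obtain ⟨⟨n0, k0⟩, hm, hmax⟩ := Finset.exists_max_image (Finset.range (r0+1) ×ˢ Finset.range P)
    (fun q => len Z q.1 q.2) ⟨(0,0), by simp; omega⟩
  simp only [Finset.mem_product, Finset.mem_range] at hm hmax
  have hμ := p.len_lt (by omega) (n := n0) hm.2
  have exr : ∃ n, ∃ k < P, max (len Z n0 k0) (3/4) < len Z n k := by
    obtain ⟨n, k, hk, hl⟩ := p.sup_len (by omega) hd2 (η := 1 - max (len Z n0 k0) (3/4))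
      (by have : max (len Z n0 k0) (3/4) < 1 := max_lt hμ (by norm_num)
          linarith)
    exact ⟨n, k, hk, by linarith⟩
  classical
  set r := Nat.find exr with hr
  obtain ⟨k1, hk1, hl1⟩ := Nat.find_spec exr
  rw [← hr] at hl1
  obtain ⟨b, hb, hbmax⟩ := Finset.exists_max_image (Finset.range P) (fun q => len Z r q) ⟨0, by simp; omega⟩
  simp only [Finset.mem_range] at hb hbmax
  have hbl : max (len Z n0 k0) (3/4) < len Z r b := lt_of_lt_of_le hl1 (hbmax k1 hk1)
  have hb34 : 3/4 < len Z r b := lt_of_le_of_lt (le_max_right _ _) hbl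
  have top : ∀ n ≤ r, ∀ k < P, len Z n k ≤ len Z r b := by
    intro n hn k hk
    rcases hn.lt_or_eq with hl | rfl
    · have := Nat.find_min exr hl
      push Not at this
      exact (this k hk).trans hbl.le
    · exact hbmax k hk
  have rr : r0 < r := by
    by_contra hc
    push Not at hc
    have := hmax (r, b) ⟨by simp; omega, hb⟩
    have h2 := lt_of_le_of_lt (le_max_left (len Z n0 k0) (3/4)) hbl
    simp only at this
    linarith
  have dat : ∀ i, ∃ n : ℕ, ∃ w : ℤ, ∃ η : ℝ, i < P → i ≠ b → n < r ∧ d * len Z n i = w + η ∧ 1 ≤ w ∧ w < d ∧ 0 < η ∧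
      η ≤ 1 - len Z r b := by
    intro i
    by_cases hi : i < P ∧ i ≠ b
    · obtain ⟨n, hn, g1, g2⟩ := p.last (by omega) hd2 hi.1 r ⟨t i, by have := htr i hi.1; omega, ht i hi.1⟩
      obtain ⟨w, hw⟩ := p.len_step (n := n) hi.1
      have b1 := p.len_two (n := r) hi.1 hb hi.2
      have b2 := p.len_pos (n := n+1) hi.1
      have b3 := p.len_lt (by omega) (n := n) hi.1
      refine ⟨n, w, len Z (n+1) i, fun _ _ => ⟨hn, by linarith, ?_, ?_, b2, by linarith⟩⟩
      · have : (0:ℝ) < w := by linarith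
        have : 0 < w := by exact_mod_cast this
        omega
      · have : (w:ℝ) < d := by nlinarith
        exact_mod_cast this
    · exact ⟨0, 0, 0, fun a b => absurd ⟨a, b⟩ hi⟩
  choose nn w η H using dat
  let x : ℕ → ℝ := fun i => c (nn i) + Z (nn i) i
  obtain ⟨i, hi, j, hj, hij, hf⟩ := Finset.exists_ne_map_eq_of_card_lt_of_maps_to
    (s := (Finset.range P).erase b) (t := Finset.Ico (0:ℤ) (4*d) ×ˢ Finset.Ico (0:ℤ) d)
    (f := fun i => (⌊4*d*Int.fract (x i)⌋, w i)) (by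
      rw [Finset.card_erase_of_mem (Finset.mem_range.2 hb), Finset.card_product]
      simp only [Int.card_Ico, Finset.card_range]
      have e1 : (4 * (d:ℤ) - 0).toNat = 4 * d := by omega
      have e2 : ((d:ℤ) - 0).toNat = d := by omega
      rw [e1, e2]; omega) (by
      intro i hi
      simp only [Finset.mem_coe, Finset.mem_erase, Finset.mem_range] at hi
      obtain ⟨_, _, a1, a2, _⟩ := H i hi.2 hi.1
      simp only [Finset.mem_coe, Finset.mem_product, Finset.mem_Ico]
      have f1 := Int.fract_nonneg (x i)
      have f2 := Int.fract_lt_one (x i)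
      refine ⟨⟨Int.floor_nonneg.2 (by positivity), Int.floor_lt.2 ?_⟩, by omega, a2⟩
      push_cast; nlinarith)
  simp only [Finset.mem_erase, Finset.mem_range] at hi hj
  simp only [Prod.mk.injEq] at hf
  obtain ⟨hf1, hf2⟩ := hf
  obtain ⟨i1, i2, i3, i4, i5, i6⟩ := H i hi.2 hi.1
  obtain ⟨j1, j2, j3, j4, j5, j6⟩ := H j hj.2 hj.1
  have cl := Int.abs_sub_lt_one_of_floor_eq_floor hf1
  rw [abs_lt] at cl
  have fi : Int.fract (x i) = x i - ⌊x i⌋ := (Int.self_sub_floor _).symm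
  have fj : Int.fract (x j) = x j - ⌊x j⌋ := (Int.self_sub_floor _).symm
  rcases le_total (Int.fract (x i)) (Int.fract (x j)) with hl | hl
  · refine p.core h (by omega) hi.2 hj.2 hij (⌊x i⌋ - ⌊x j⌋) (w i) (η := η i) (η' := η j) (ρ := 1 - len Z r b)
      ?_ ?_ i2 (by rw [hf2]; exact j2) i3 i5 j5 (by linarith) i6 (by linarith) ?_
    · change x i ≤ x j + _
      push_cast; linarith
    · change 4 * d * (x j + _ - x i) < 1
      push_cast
      rw [fi, fj] at cl; linarith [cl.1]
    · intro k hk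
      have := top (nn j + 1) j1 k hk
      linarith
  · refine p.core h (by omega) hj.2 hi.2 hij.symm (⌊x j⌋ - ⌊x i⌋) (w j) (η := η j) (η' := η i) (ρ := 1 - len Z r b)
      ?_ ?_ j2 (by rw [← hf2]; exact i2) j3 j5 i5 (by linarith) j6 (by linarith) ?_
    · change x j ≤ x i + _
      push_cast; linarith
    · change 4 * d * (x i + _ - x j) < 1
      push_cast
      rw [fi, fj] at cl; linarith [cl.2]
    · intro k hk
      have := top (nn i + 1) i1 k hk
      linarith

end Poly

theorem wander {d : ℕ} {R : ℝ → ℝ → Prop} (h : RLam d R) {u : ℝ} (iu : Irrational u) (hw : ∀ n : ℕ, ¬ Weird d R (d^n*u))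
    (hd : ∀ n m : ℕ, n ≠ m → ¬ UU R (d^n*u) (d^m*u)) (hinf : ¬ LFin R u) : False := by
  obtain ⟨s, c, Z, p⟩ := h.mkPoly iu hw hd hinf (4*d*d+3) (by omega)
  exact p.false_of h le_rfl

end RLam


namespace RLam
variable {d : ℕ} {R : ℝ → ℝ → Prop}

theorem main_real (h : RLam d R) {u v s : ℝ} (is : Irrational s) (hinf : ¬ LFin R s)
    (h1 : u < v) (h2 : v < u + 1)
    (hu : ∀ ε > 0, ∃ t, Irrational t ∧ UU R s t ∧ |t - u| < ε)
    (hv : ∀ ε > 0, ∃ t, Irrational t ∧ UU R s t ∧ |t - v| < ε)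
    (hf : ∀ t, Irrational t → UU R s t → u < t → t < v → False) : R u v := by
  rcases h.gap is h1 h2.le (fun he => absurd he h2.ne) hu hv hf with hr | g
  · exact hr
  by_cases iu : Irrational u
  · have iv : Irrational v := by
      by_contra hc; exact h.good_rat g hc iu
    exfalso
    have su := h.U_closed is iu hu
    have iL : ¬ LFin R u := fun hL => hinf (LFin_congr (U_symm su) hL)
    by_cases H : ∀ N : ℕ, ∃ n ≥ N, Weird d R (d^n*u)
    · exact h.caseI g iu iv H
    · push Not at H
      obtain ⟨N, hN⟩ := H
      have e : ∀ n : ℕ, (d:ℝ)^n*((d:ℝ)^N*u) = d^(N+n)*u := by intro n; ring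
      refine h.wander (u := (d:ℝ)^N*u) (h.irr_pow iu N) ?_ ?_ (h.not_LFin_pow iu iL N)
      · intro n; rw [e]; exact hN _ (by omega)
      · intro n m hnm hU
        rw [e, e] at hU
        rcases lt_or_gt_of_ne hnm with hl | hl
        · exact h.caseII g iu iv hN (by omega) (show N + n < N + m by omega) hU
        · exact h.caseII g iu iv hN (by omega) (show N + m < N + n by omega) (U_symm hU)
  · exact h.good_closed g iu (h.good_rat' g iu)

end RLam


namespace RLam

lemma coe_eq {x y : ℝ} : (x : Circle1) = y ↔ ∃ k : ℤ, y = x + k := by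
  rw [eq_comm, ← sub_eq_zero, ← AddCircle.coe_sub, AddCircle.coe_eq_zero_iff]
  constructor
  · rintro ⟨k, hk⟩; refine ⟨k, ?_⟩; simp at hk; linarith
  · rintro ⟨k, hk⟩; refine ⟨k, ?_⟩; simp [hk]

lemma coe_add_int (x : ℝ) (k : ℤ) : ((x + k : ℝ) : Circle1) = x := (coe_eq.2 ⟨k, rfl⟩).symm

lemma mem_ratC {x : ℝ} : (x : Circle1) ∈ ratC ↔ ¬ Irrational x := by
  constructor
  · rintro ⟨q, hq⟩ hi
    obtain ⟨k, hk⟩ := coe_eq.1 hq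
    have := (irr_add_int k).2 hi
    rw [← hk] at this
    exact this ⟨q, rfl⟩
  · intro hx
    obtain ⟨q, rfl⟩ : ∃ q : ℚ, (q:ℝ) = x := by simpa [Irrational] using hx
    exact ⟨q, rfl⟩

lemma md_coe (d : ℕ) (x : ℝ) : md d (x : Circle1) = ((d * x : ℝ) : Circle1) := by
  unfold md
  rw [← AddCircle.coe_nsmul, nsmul_eq_mul]

lemma surj (z : Circle1) : ∃ x : ℝ, (x : Circle1) = z := QuotientAddGroup.mk_surjective z

def arc (a b : ℝ) : Set Circle1 := (fun x : ℝ => (x : Circle1)) '' Ioo a b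

lemma cont_coe : Continuous (fun x : ℝ => (x : Circle1)) := AddCircle.continuous_mk' 1

lemma mem_arc {a b s : ℝ} : (s : Circle1) ∈ arc a b ↔ inArc a b s := by
  constructor
  · rintro ⟨y, hy, he⟩
    obtain ⟨k, hk⟩ := coe_eq.1 he.symm
    exact ⟨k, by rw [← hk]; exact hy.1, by rw [← hk]; exact hy.2⟩
  · rintro ⟨k, h1, h2⟩
    exact ⟨s + k, ⟨h1, h2⟩, coe_add_int s k⟩

lemma arc_open (a b : ℝ) : IsOpen (arc a b) := QuotientAddGroup.isOpenMap_coe _ isOpen_Ioo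

lemma arc_disj {a b : ℝ} : Disjoint (arc a b) (arc b (a+1)) := by
  rw [Set.disjoint_left]
  rintro z ⟨x, ⟨h1, h2⟩, rfl⟩ hz
  obtain ⟨k, k1, k2⟩ := mem_arc.1 hz
  have a1 : (0:ℝ) < k := by linarith
  have a2 : (k:ℝ) < 1 := by linarith
  have a1' : 0 < k := by exact_mod_cast a1
  have a2' : k < 1 := by exact_mod_cast a2
  omega

lemma arc_cover {a b : ℝ} {S : Set Circle1} (ha : (a : Circle1) ∉ S) (hb : (b : Circle1) ∉ S) :
    S ⊆ arc a b ∪ arc b (a+1) := by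
  intro z hz
  obtain ⟨x, rfl⟩ := surj z
  obtain ⟨k, k1, k2⟩ := exists_lift x (a+1)
  rw [← coe_add_int x k] at hz ⊢
  have n1 : a ≠ x + k := by rintro h; exact ha (h ▸ hz)
  have n2 : b ≠ x + k := by rintro h; exact hb (h ▸ hz)
  have l1 : a < x + k := lt_of_le_of_ne (by linarith) n1
  rcases lt_or_gt_of_ne n2 with hl | hl
  · exact Or.inr ⟨_, ⟨hl, k2⟩, rfl⟩
  · exact Or.inl ⟨_, ⟨l1, hl⟩, rfl⟩

lemma T1 {a b : ℝ} {S : Set Circle1} (hS : IsPreconnected S) (ha : (a : Circle1) ∉ S)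
    (hb : (b : Circle1) ∉ S) {x : Circle1} (hx : x ∈ S) (hxa : x ∈ arc a b) : S ⊆ arc a b :=
  hS.subset_left_of_subset_union (arc_open _ _) (arc_open _ _) arc_disj (arc_cover ha hb) ⟨x, hx, hxa⟩

lemma mkRLam {d : ℕ} (hd : 2 ≤ d) (lam : InvRatLam d) :
    RLam d (fun x y : ℝ => lam.rel (x : Circle1) (y : Circle1)) where
  two := hd
  rat := fun x y hr => mem_ratC.1 (lam.rel_rat _ _ hr).1
  refl := fun x hx => lam.refl _ (mem_ratC.2 hx)
  symm := fun x y hr => lam.symm _ _ hr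
  trans := fun x y z h1 h2 => lam.trans _ _ _ h1 h2
  per := fun x hx => by
    have e : ((x + 1 : ℝ) : Circle1) = x := by have := coe_add_int x 1; exact_mod_cast this
    rw [e]; exact lam.refl _ (mem_ratC.2 hx)
  closed := fun x y hx hy H => by
    apply lam.closed' _ (mem_ratC.2 hx) _ (mem_ratC.2 hy)
    have h1 : (x, y) ∈ closure {p : ℝ × ℝ | lam.rel (p.1 : Circle1) (p.2 : Circle1)} := by
      rw [Metric.mem_closure_iff]
      intro ε hε
      obtain ⟨a, b, hr, ha, hb⟩ := H ε hε
      refine ⟨(a, b), hr, ?_⟩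
      rw [Prod.dist_eq, max_lt_iff, dist_comm, Real.dist_eq, dist_comm, Real.dist_eq]
      exact ⟨ha, hb⟩
    exact map_mem_closure (f := fun p : ℝ × ℝ => ((p.1 : Circle1), (p.2 : Circle1)))
      ((cont_coe.comp continuous_fst).prodMk (cont_coe.comp continuous_snd)) h1 (fun p hp => hp)
  fin := fun x a b => by
    choose g hg using surj
    apply Set.Finite.subset ((lam.finiteClass (x : Circle1)).biUnion
      (t := fun f => (fun k : ℤ => g f + k) '' Icc ⌊a - g f⌋ ⌊b - g f⌋) (fun f _ => (Set.finite_Icc _ _).image _))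
    rintro y ⟨hr, h1, h2⟩
    simp only [mem_iUnion]
    obtain ⟨k, hk⟩ := coe_eq.1 (hg (y : Circle1))
    refine ⟨(y : Circle1), hr, k, ⟨?_, ?_⟩, hk.symm⟩
    · have := Int.floor_mono (show a - g y ≤ k by linarith)
      rwa [Int.floor_intCast] at this
    · exact Int.le_floor.2 (by linarith)
  unl := fun a b c e h1 h2 h3 h4 hac hbe => by
    by_contra hn
    obtain ⟨x, hx, hsub⟩ := lam.unlinkedClass _ _ hn
    have hS := isPreconnected_connectedComponentIn (x := x) (F := (relClass lam.rel (a : Circle1))ᶜ)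
    have hS2 := connectedComponentIn_subset (relClass lam.rel (a : Circle1))ᶜ x
    have ma : (a : Circle1) ∈ relClass lam.rel (a : Circle1) := lam.refl _ (lam.rel_rat _ _ hac).1
    have mb : (b : Circle1) ∈ relClass lam.rel (b : Circle1) := lam.refl _ (lam.rel_rat _ _ hbe).1
    have := T1 hS (fun hh => hS2 hh ma) (b := c) (fun hh => hS2 hh hac) (hsub mb) ⟨b, ⟨h1, h2⟩, rfl⟩ (hsub hbe)
    obtain ⟨k, k1, k2⟩ := mem_arc.1 this
    have a1 : (k:ℝ) < 0 := by linarith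
    have a2 : (-1:ℝ) < k := by linarith
    have a1' : k < 0 := by exact_mod_cast a1
    have a2' : -1 < k := by exact_mod_cast a2
    omega
  inv := fun x y hr => by
    have hi := (lam.invariant _ (lam.rel_rat _ _ hr).1).1
    have : md d (y : Circle1) ∈ relClass lam.rel (md d (x : Circle1)) := by
      rw [← hi]; exact ⟨_, hr, rfl⟩
    rw [md_coe, md_coe] at this
    exact this
  onto := fun x z hx hr => by
    have hi := (lam.invariant _ (mem_ratC.2 hx)).1
    have : (z : Circle1) ∈ relClass lam.rel (md d (x : Circle1)) := by rw [md_coe]; exact hr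
    rw [← hi] at this
    obtain ⟨w, hw, hw2⟩ := this
    obtain ⟨y, rfl⟩ := surj w
    rw [md_coe, eq_comm] at hw2
    obtain ⟨k, hk⟩ := coe_eq.1 hw2
    exact ⟨y, k, hw, hk⟩

lemma unl_iff {d : ℕ} (lam : InvRatLam d) {s t : ℝ} (is : Irrational s) :
    UnlRel lam.rel (s : Circle1) (t : Circle1) ↔
      (Irrational t ∧ UU (fun x y : ℝ => lam.rel (x : Circle1) (y : Circle1)) s t) := by
  constructor
  · rintro ⟨h1, h2, h3⟩
    refine ⟨by_contra fun hc => h2 (mem_ratC.2 hc), ?_⟩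
    rcases h3 with he | hcomp
    · obtain ⟨k, rfl⟩ := coe_eq.1 he
      exact U_shift s k
    · intro a b hab hlt hlt1
      have ra := (lam.rel_rat _ _ hab).1
      have hS := isPreconnected_connectedComponentIn (x := (s : Circle1)) (F := (relClass lam.rel (a : Circle1))ᶜ)
      have hS2 := connectedComponentIn_subset (relClass lam.rel (a : Circle1))ᶜ (s : Circle1)
      have ms : (s : Circle1) ∈ connectedComponentIn (relClass lam.rel (a : Circle1))ᶜ (s : Circle1) :=
        mem_connectedComponentIn (fun hh => h1 (lam.rel_rat _ _ hh).2)
      have mt := hcomp _ ra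
      have na : (a : Circle1) ∉ connectedComponentIn (relClass lam.rel (a : Circle1))ᶜ (s : Circle1) :=
        fun hh => hS2 hh (lam.refl _ ra)
      have nb : (b : Circle1) ∉ connectedComponentIn (relClass lam.rel (a : Circle1))ᶜ (s : Circle1) :=
        fun hh => hS2 hh hab
      constructor
      · intro hi; exact mem_arc.1 (T1 hS na nb ms (mem_arc.2 hi) mt)
      · intro hi; exact mem_arc.1 (T1 hS na nb mt (mem_arc.2 hi) ms)
  · rintro ⟨it, hU⟩
    refine ⟨fun hc => mem_ratC.1 hc is, fun hc => mem_ratC.1 hc it, ?_⟩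
    obtain ⟨k, k1, k2⟩ := exists_lift t (s+1)
    rw [← coe_add_int t k]
    have it' := (irr_add_int k).2 it
    have hU' := U_shiftr hU k
    generalize t + (k:ℝ) = t' at *
    rcases (show s ≤ t' by linarith).eq_or_lt with he | hl
    · left; rw [he]
    right
    intro x hx
    have irrn : ∀ y : ℝ, (y : Circle1) ∈ relClass lam.rel x → ¬ Irrational y :=
      fun y hy => mem_ratC.1 (lam.rel_rat _ _ hy).2
    by_cases c1 : ∃ a, s ≤ a ∧ a ≤ t' ∧ (a : Circle1) ∈ relClass lam.rel x
    · by_cases c2 : ∃ b, t' ≤ b ∧ b ≤ s + 1 ∧ (b : Circle1) ∈ relClass lam.rel x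
      · exfalso
        obtain ⟨a, a1, a2, ha⟩ := c1
        obtain ⟨b, b1, b2, hb⟩ := c2
        have a1 : s < a := lt_of_le_of_ne a1 (by rintro rfl; exact irrn _ ha is)
        have a2 : a < t' := lt_of_le_of_ne a2 (by rintro rfl; exact irrn _ ha it')
        have b1 : t' < b := lt_of_le_of_ne b1 (by rintro rfl; exact irrn _ hb it')
        have b2 : b < s + 1 := lt_of_le_of_ne b2 (by
          rintro rfl; exact irrn _ hb (by have := (irr_add_int 1).2 is; exact_mod_cast this))
        have := (hU' a b (lam.trans _ _ _ (lam.symm _ _ ha) hb) (by linarith) (by linarith)).2 ⟨0, by simpa using a2, by simpa using b1⟩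
        obtain ⟨k, k1, k2⟩ := this
        have a1 : (0:ℝ) < k := by linarith
        have a2 : (k:ℝ) < 1 := by linarith
        have a1' : 0 < k := by exact_mod_cast a1
        have a2' : k < 1 := by exact_mod_cast a2
        omega
      · push Not at c2
        have hpc : IsPreconnected ((fun x : ℝ => (x : Circle1)) '' Icc t' (s+1)) :=
          isPreconnected_Icc.image _ cont_coe.continuousOn
        have e : ((s + 1 : ℝ) : Circle1) = s := by have := coe_add_int s 1; exact_mod_cast this
        refine hpc.subset_connectedComponentIn ⟨s + 1, ⟨k2.le, le_rfl⟩, e⟩ ?_ ⟨t', ⟨le_rfl, k2.le⟩, rfl⟩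
        rintro _ ⟨y, hy, rfl⟩
        exact c2 y hy.1 hy.2
    · push Not at c1
      have hpc : IsPreconnected ((fun x : ℝ => (x : Circle1)) '' Icc s t') :=
        isPreconnected_Icc.image _ cont_coe.continuousOn
      refine hpc.subset_connectedComponentIn ⟨s, ⟨le_rfl, hl.le⟩, rfl⟩ ?_ ⟨t', ⟨hl.le, le_rfl⟩, rfl⟩
      rintro _ ⟨y, hy, rfl⟩
      exact c1 y hy.1 hy.2

end RLam

/-- If `L` is an infinite `λ`-unlinked class and `(θ, θ')` is a
connected component of `(ℝ/ℤ) \ closure L` (an open arc with frontier `{θ, θ'}`),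
then `θ` and `θ'` are rational and `λ`-equivalent. -/
theorem gap_endpoints_rational_and_equivalent (d : ℕ) (hd : 2 ≤ d)
    (lam : InvRatLam d) (L : Set Circle1) (hL : IsUnlClass lam.rel L)
    (hinf : L.Infinite) (C : Set Circle1) (hC : IsCompOf C (closure L)ᶜ)
    (θ θ' : Circle1) (hne : θ ≠ θ') (hfr : frontier C = {θ, θ'}) :
    θ ∈ ratC ∧ θ' ∈ ratC ∧ lam.rel θ θ' := by
  suffices key : lam.rel θ θ' from ⟨(lam.rel_rat _ _ key).1, (lam.rel_rat _ _ key).2, key⟩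
  have h := RLam.mkRLam hd lam
  obtain ⟨θ0, hθ0, rfl⟩ := hL
  obtain ⟨s, rfl⟩ := RLam.surj θ0
  have is : Irrational s := by_contra fun hc => hθ0 (RLam.mem_ratC.2 hc)
  set L : Set Circle1 := {θ' | UnlRel lam.rel (s : Circle1) θ'} with hLdef
  have memL : ∀ t : ℝ, (t : Circle1) ∈ L ↔
      (Irrational t ∧ UU (fun x y : ℝ => lam.rel (x : Circle1) (y : Circle1)) s t) :=
    fun t => RLam.unl_iff lam is
  have nLF : ¬ LFin (fun x y : ℝ => lam.rel (x : Circle1) (y : Circle1)) s := by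
    intro hf
    apply hinf
    apply ((hf 0 1).image (fun x : ℝ => (x : Circle1))).subset
    intro z hz
    obtain ⟨x, rfl⟩ := RLam.surj z
    obtain ⟨k, k1, k2⟩ := RLam.exists_lift x 1
    rw [← RLam.coe_add_int x k] at hz ⊢
    have := (memL _).1 hz
    exact ⟨_, ⟨this.1, this.2, by linarith, k2.le⟩, rfl⟩
  obtain ⟨x, hx, rfl⟩ := hC
  obtain ⟨x0, rfl⟩ := RLam.surj x
  let T : Set ℝ := (fun x : ℝ => (x : Circle1)) ⁻¹' closure L
  have Tcl : IsClosed T := isClosed_closure.preimage RLam.cont_coe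
  have Tper : ∀ t ∈ T, ∀ k : ℤ, t + k ∈ T := by
    intro t ht k
    change ((t + k : ℝ) : Circle1) ∈ closure L
    rw [RLam.coe_add_int]; exact ht
  have sT : s ∈ T := subset_closure ((memL s).2 ⟨is, RLam.U_refl _⟩)
  have xT : x0 ∉ T := hx
  obtain ⟨u, ⟨uT, ux⟩, umax⟩ : ∃ u, IsGreatest (T ∩ Iic x0) u := by
    obtain ⟨k, k1, k2⟩ := RLam.exists_lift s x0
    exact ⟨_, (Tcl.inter isClosed_Iic).isGreatest_csSup ⟨s + k, Tper s sT k, k2.le⟩ ⟨x0, fun y hy => hy.2⟩⟩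
  obtain ⟨v, ⟨vT, vx⟩, vmin⟩ : ∃ v, IsLeast (T ∩ Ici x0) v := by
    obtain ⟨k, k1, k2⟩ := RLam.exists_lift s (x0+1)
    exact ⟨_, (Tcl.inter isClosed_Ici).isLeast_csInf ⟨s + k, Tper s sT k, by simp at k1 ⊢; linarith⟩ ⟨x0, fun y hy => hy.2⟩⟩
  have ux : u < x0 := lt_of_le_of_ne ux (by rintro rfl; exact xT uT)
  have vx : x0 < v := lt_of_le_of_ne vx (by rintro rfl; exact xT vT)
  have u1T : u + 1 ∈ T := by have := Tper u uT 1; exact_mod_cast this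
  have vu : v ≤ u + 1 := by
    apply vmin ⟨u1T, ?_⟩
    by_contra hc
    simp at hc
    have := umax ⟨u1T, hc.le⟩
    linarith
  have free : ∀ t, u < t → t < v → t ∉ T := by
    intro t h1 h2 ht
    rcases le_total t x0 with hl | hl
    · have := umax ⟨ht, hl⟩; linarith
    · have := vmin ⟨ht, hl⟩; linarith
  set C := connectedComponentIn (closure L)ᶜ (x0 : Circle1) with hCdef
  have Csub : C ⊆ (closure L)ᶜ := connectedComponentIn_subset _ _
  have xC : (x0 : Circle1) ∈ C := mem_connectedComponentIn hx
  have C1 : C ⊆ RLam.arc u v := RLam.T1 isPreconnected_connectedComponentIn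
    (fun hh => Csub hh uT) (fun hh => Csub hh vT) xC ⟨x0, ⟨ux, vx⟩, rfl⟩
  have C2 : RLam.arc u v ⊆ C := by
    apply IsPreconnected.subset_connectedComponentIn
    · exact isPreconnected_Ioo.image _ RLam.cont_coe.continuousOn
    · exact ⟨x0, ⟨ux, vx⟩, rfl⟩
    · rintro _ ⟨y, hy, rfl⟩
      exact free y hy.1 hy.2
  have Ceq : C = RLam.arc u v := C1.antisymm C2
  have fr : frontier C ⊆ {(u : Circle1), (v : Circle1)} := by
    rw [Ceq, (RLam.arc_open u v).frontier_eq]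
    rintro z ⟨hz, hz2⟩
    have cc : IsClosed ((fun x : ℝ => (x : Circle1)) '' Icc u v) :=
      (isCompact_Icc.image RLam.cont_coe).isClosed
    have : z ∈ (fun x : ℝ => (x : Circle1)) '' Icc u v :=
      closure_minimal (image_mono Ioo_subset_Icc_self) cc hz
    obtain ⟨y, hy, rfl⟩ := this
    rcases hy.1.eq_or_lt with rfl | h1
    · left; rfl
    rcases hy.2.eq_or_lt with rfl | h2
    · right; rfl
    exact absurd ⟨y, ⟨h1, h2⟩, rfl⟩ hz2
  rw [hfr] at fr
  have f1 : θ = u ∨ θ = v := fr (by simp)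
  have f2 : θ' = u ∨ θ' = v := fr (by simp)
  have vlt : v < u + 1 := by
    refine lt_of_le_of_ne vu ?_
    intro he
    have : (u : Circle1) = v := RLam.coe_eq.2 ⟨1, by rw [he]; simp⟩
    rw [← this] at f1 f2
    apply hne
    rcases f1 with rfl | rfl <;> rcases f2 with h2 | h2 <;> exact h2.symm
  have app : ∀ w ∈ T, ∀ ε > 0, ∃ t, Irrational t ∧
      UU (fun x y : ℝ => lam.rel (x : Circle1) (y : Circle1)) s t ∧ |t - w| < ε := by
    intro w hw ε hε
    have hw : (w : Circle1) ∈ closure L := hw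
    rw [mem_closure_iff] at hw
    obtain ⟨z, ⟨y, hy, rfl⟩, hz⟩ := hw (RLam.arc (w-ε) (w+ε)) (RLam.arc_open _ _) ⟨w, ⟨by linarith, by linarith⟩, rfl⟩
    obtain ⟨g1, g2⟩ := (memL y).1 hz
    exact ⟨y, g1, g2, by rw [abs_lt]; constructor <;> linarith [hy.1, hy.2]⟩
  have fin := h.main_real is nLF (ux.trans vx) vlt (app u uT) (app v vT)
    (fun t it hU h1 h2 => free t h1 h2 (subset_closure ((memL t).2 ⟨it, hU⟩)))
  rcases f1 with rfl | rfl <;> rcases f2 with rfl | rfl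
  · exact absurd rfl hne
  · exact fin
  · exact lam.symm _ _ fin
  · exact absurd rfl hne
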